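/- arXiv:math/0301063 — 5 statements merged into one kernel-verified Lean document; each statement's English description precedes it below -/
import Mathlib

section
/- Let G : [0, ∞) → M_n(ℂ) be continuous and let S : [0, ∞) → M_n(ℂ) be C¹. Let Γ : ℂⁿ → ℂᵐ be linear, and let C₀, λ, δ > 0 and C₁ ≥ 0 be constants such that: (i) S(x) = S(x)* and ‖S(x)‖ ≤ C₀ for all x; (ii) S(x)G(x) + G(x)*S(x) + S′(x) ≥ 2λ Id for all x (as Hermitian matrices); (iii) S(0) ≥ δ Id − C₁ Γ*Γ. Then for every C¹ function u : [0, ∞) → ℂⁿ with compact support, λ ∫₀^∞ |u(x)|² dx + δ |u(0)|² ≤ (C₀²/λ) ∫₀^∞ |u′(x) − G(x)u(x)|² dx + C₁ |Γ u(0)|². -/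
open Matrix Set
open scoped ComplexOrder

noncomputable section

/-!
The derivative of the energy `e(x) = re ⟪S(x) u(x), u(x)⟫` is
`re ⟪S' u, u⟫ + 2 re ⟪S u, u'⟫`. Substituting `u' = G u + f`, the symmetrizer inequality bounds it
below by `2λ|u|² + 2 re ⟪S u, f⟫`, hence by `λ|u|² - (C₀²/λ)|f|²` after Young's inequality.
Integrate over the half line: `e` is integrable because `|e| ≤ C₀|u|²`, so it is arbitrarily small
at arbitrarily large `x`, and only `-e(0)` remains. The boundary inequality bounds `e(0)` below.
-/

open MeasureTheory Filter Topology ContinuousLinearMap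
open scoped InnerProductSpace InnerProduct

section RealAnalysis

variable {a : ℝ}

lemma frequently_norm_lt_of_integrableOn_Ici {E : Type*} [NormedAddCommGroup E] {g : ℝ → E}
    (hg : IntegrableOn g (Ici a)) {ε : ℝ} (hε : 0 < ε) : ∃ᶠ x in atTop, ‖g x‖ < ε := by
  intro hlarge
  obtain ⟨b, hb⟩ := eventually_atTop.1 hlarge
  have hfinite : volume {x ∈ Ici a | ε ≤ ‖g x‖} < ⊤ := by
    have := hg.measure_norm_ge_lt_top hε
    rwa [Measure.restrict_apply₀' measurableSet_Ici.nullMeasurableSet, inter_comm] at this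
  refine absurd hfinite (not_lt_of_ge ?_)
  rw [← Real.volume_Ici (a := max a b)]
  refine measure_mono fun x hx => ⟨(le_max_left a b).trans hx, ?_⟩
  exact not_lt.1 (hb x ((le_max_right a b).trans hx))

lemma integral_Ici_le_neg_of_le_deriv {e e' φ : ℝ → ℝ}
    (hderiv : ∀ x ∈ Ici a, HasDerivWithinAt e (e' x) (Ici a) x) (hle : ∀ x ∈ Ici a, φ x ≤ e' x)
    (he : IntegrableOn e (Ici a)) (hφ : IntegrableOn φ (Ici a)) :
    ∫ x in Ici a, φ x ≤ -e a := by
  have hfinite (b : ℝ) (hab : a ≤ b) : ∫ x in a..b, φ x ≤ e b - e a :=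
    intervalIntegral.integral_le_sub_of_hasDeriv_right_of_le hab
      (fun x hx => (hderiv x hx.1).continuousWithinAt.mono Icc_subset_Ici_self)
      (fun x hx => (hderiv x hx.1.le).mono (Ioi_subset_Ici hx.1.le))
      (hφ.mono_set Icc_subset_Ici_self) (fun x hx => hle x hx.1.le)
  have hlim : Tendsto (fun b => ∫ x in a..b, φ x) atTop (𝓝 (∫ x in Ici a, φ x)) := by
    rw [integral_Ici_eq_integral_Ioi]
    exact intervalIntegral_tendsto_integral_Ioi a (hφ.mono_set Ioi_subset_Ici_self) tendsto_id
  refine le_of_forall_pos_le_add fun ε hε => le_of_tendsto_of_frequently hlim ?_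
  refine ((frequently_norm_lt_of_integrableOn_Ici he hε).and_eventually
    (eventually_ge_atTop a)).mono fun b ⟨hsmall, hab⟩ => ?_
  linarith [hfinite b hab, Real.le_norm_self (e b), hsmall]

lemma integrableOn_norm_sq_of_hasCompactSupport {X E : Type*} [TopologicalSpace X]
    [MeasurableSpace X] [OpensMeasurableSpace X] {μ : Measure X} [IsFiniteMeasureOnCompacts μ]
    [NormedAddCommGroup E] {g : X → E} {s : Set X} (hs : IsClosed s) (hg : ContinuousOn g s)
    (hsupp : HasCompactSupport g) : IntegrableOn (fun x => ‖g x‖ ^ 2) s μ := by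
  have hK : IsCompact (s ∩ tsupport g) := hsupp.isCompact.inter_left hs
  have hKm : MeasurableSet (s ∩ tsupport g) := (hs.inter (isClosed_tsupport g)).measurableSet
  have hg_sq : ContinuousOn (fun x => ‖g x‖ ^ 2) (s ∩ tsupport g) :=
    (hg.mono inter_subset_left).norm.pow 2
  refine (hg_sq.integrableOn_compact' hK hKm).of_forall_sdiff_eq_zero hs.measurableSet
    fun x hx => ?_
  have hgx : g x = 0 := image_eq_zero_of_notMem_tsupport fun hxg => hx.2 ⟨hx.1, hxg⟩
  simp [hgx]

end RealAnalysis

section HilbertSpace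

variable {𝕜 E F : Type*} [RCLike 𝕜] [NormedAddCommGroup E] [InnerProductSpace 𝕜 E]
  [NormedAddCommGroup F] [InnerProductSpace 𝕜 F]

lemma reApplyInnerSelf_add (S T : E →L[𝕜] E) (v : E) :
    (S + T).reApplyInnerSelf v = S.reApplyInnerSelf v + T.reApplyInnerSelf v := by
  simp [reApplyInnerSelf_apply, inner_add_left]

lemma reApplyInnerSelf_sub (S T : E →L[𝕜] E) (v : E) :
    (S - T).reApplyInnerSelf v = S.reApplyInnerSelf v - T.reApplyInnerSelf v := by
  simp [reApplyInnerSelf_apply, inner_sub_left]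

lemma reApplyInnerSelf_ofReal_smul (c : ℝ) (T : E →L[𝕜] E) (v : E) :
    ((c : 𝕜) • T).reApplyInnerSelf v = c * T.reApplyInnerSelf v := by
  simp [reApplyInnerSelf_apply, inner_smul_left]

lemma reApplyInnerSelf_one (v : E) : (1 : E →L[𝕜] E).reApplyInnerSelf v = ‖v‖ ^ 2 :=
  inner_self_eq_norm_sq v

lemma reApplyInnerSelf_mono {S T : E →L[𝕜] E} (h : S ≤ T) (v : E) :
    S.reApplyInnerSelf v ≤ T.reApplyInnerSelf v := by
  rw [← sub_nonneg, ← reApplyInnerSelf_sub]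
  exact ((ContinuousLinearMap.le_def S T).1 h).re_inner_nonneg_left v

lemma abs_re_inner_apply_le {C : ℝ} {S : E →L[𝕜] F} (hS : ‖S‖ ≤ C) (v : E) (f : F) :
    |RCLike.re ⟪S v, f⟫_𝕜| ≤ C * ‖v‖ * ‖f‖ :=
  calc |RCLike.re ⟪S v, f⟫_𝕜| ≤ ‖S v‖ * ‖f‖ :=
        (RCLike.abs_re_le_norm _).trans (norm_inner_le_norm _ _)
    _ ≤ C * ‖v‖ * ‖f‖ := by gcongr; exact S.le_of_opNorm_le hS v

lemma neg_add_le_two_mul_re_inner_apply {C lam : ℝ} (hlam : 0 < lam) {S : E →L[𝕜] F}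
    (hS : ‖S‖ ≤ C) (v : E) (f : F) :
    -(lam * ‖v‖ ^ 2 + C ^ 2 / lam * ‖f‖ ^ 2) ≤ 2 * RCLike.re ⟪S v, f⟫_𝕜 := by
  have hyoung : 2 * ‖v‖ * (C * ‖f‖) ≤ lam * ‖v‖ ^ 2 + lam⁻¹ * (C * ‖f‖) ^ 2 :=
    two_mul_le_add_mul_sq hlam
  have hsq : lam⁻¹ * (C * ‖f‖) ^ 2 = C ^ 2 / lam * ‖f‖ ^ 2 := by ring
  linarith [neg_le_of_abs_le (abs_re_inner_apply_le hS v f)]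

variable [CompleteSpace E]

lemma reApplyInnerSelf_adjoint_comp_self [CompleteSpace F] (Γ : E →L[𝕜] F) (v : E) :
    (Γ† ∘L Γ).reApplyInnerSelf v = ‖Γ v‖ ^ 2 :=
  (apply_norm_sq_eq_inner_adjoint_left Γ v).symm

lemma reApplyInnerSelf_mul_add_star_mul {S : E →L[𝕜] E} (hS : IsSelfAdjoint S) (G : E →L[𝕜] E)
    (v : E) : (S * G + star G * S).reApplyInnerSelf v = 2 * RCLike.re ⟪S v, G v⟫_𝕜 := by
  have hSG : ⟪S (G v), v⟫_𝕜 = ⟪G v, S v⟫_𝕜 := hS.isSymmetric (G v) v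
  simp [reApplyInnerSelf_apply, star_eq_adjoint, inner_add_left, adjoint_inner_left, hSG,
    inner_re_symm (𝕜 := 𝕜) (G v), two_mul]

lemma hasDerivWithinAt_reApplyInnerSelf [NormedSpace ℝ E] {S : ℝ → E →L[𝕜] E}
    {S' : E →L[𝕜] E} {u : ℝ → E} {u' : E} {s : Set ℝ} {x : ℝ}
    (hSx : IsSelfAdjoint (S x)) (hS : HasDerivWithinAt S S' s x) (hu : HasDerivWithinAt u u' s x) :
    HasDerivWithinAt (fun y => (S y).reApplyInnerSelf (u y))
      (S'.reApplyInnerSelf (u x) + 2 * RCLike.re ⟪S x (u x), u'⟫_𝕜) s x := by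
  have hSℝ : HasDerivWithinAt (fun y => (S y).restrictScalars ℝ) (S'.restrictScalars ℝ) s x :=
    (restrictScalarsL 𝕜 E E ℝ ℝ).hasFDerivAt.comp_hasDerivWithinAt x hS
  have hinner := (hSℝ.clm_apply hu).inner 𝕜 hu
  have hre := (RCLike.reCLM (K := 𝕜)).hasFDerivAt.comp_hasDerivWithinAt x hinner
  refine hre.congr_deriv ?_
  have hsymm : ⟪S x u', u x⟫_𝕜 = ⟪u', S x (u x)⟫_𝕜 := hSx.isSymmetric u' (u x)
  simp only [reApplyInnerSelf_apply, RCLike.reCLM_apply, coe_restrictScalars', inner_add_left,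
    hsymm, map_add, inner_re_symm (𝕜 := 𝕜) u']
  ring

lemma le_reApplyInnerSelf_add_two_mul_re_inner {C lam : ℝ} (hlam : 0 < lam)
    {S S' G : E →L[𝕜] E} (hS : IsSelfAdjoint S) (hSC : ‖S‖ ≤ C)
    (hpos : ((2 * lam : ℝ) : 𝕜) • 1 ≤ S * G + star G * S + S') (v w : E) :
    lam * ‖v‖ ^ 2 - C ^ 2 / lam * ‖w - G v‖ ^ 2 ≤
      S'.reApplyInnerSelf v + 2 * RCLike.re ⟪S v, w⟫_𝕜 := by
  have hcoercive : 2 * lam * ‖v‖ ^ 2 ≤ 2 * RCLike.re ⟪S v, G v⟫_𝕜 + S'.reApplyInnerSelf v := by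
    simpa only [reApplyInnerSelf_ofReal_smul, reApplyInnerSelf_one, reApplyInnerSelf_add _ S',
      reApplyInnerSelf_mul_add_star_mul hS] using reApplyInnerSelf_mono hpos v
  have hforcing := neg_add_le_two_mul_re_inner_apply hlam hSC v (w - G v)
  rw [inner_sub_right, map_sub] at hforcing
  linarith

theorem symmetrizer_energy_estimate_general [CompleteSpace F] [NormedSpace ℝ E]
    {G S S' : ℝ → E →L[𝕜] E} {Γ : E →L[𝕜] F} {C₀ lam δ C₁ : ℝ}
    (hlam : 0 < lam)
    (hSderiv : ∀ x ∈ Ici (0 : ℝ), HasDerivWithinAt S (S' x) (Ici 0) x)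
    (hSsa : ∀ x ∈ Ici (0 : ℝ), IsSelfAdjoint (S x))
    (hSbound : ∀ x ∈ Ici (0 : ℝ), ‖S x‖ ≤ C₀)
    (hpos : ∀ x ∈ Ici (0 : ℝ),
      ((2 * lam : ℝ) : 𝕜) • 1 ≤ S x * G x + star (G x) * S x + S' x)
    (hbdry : (δ : 𝕜) • 1 - (C₁ : 𝕜) • (Γ† ∘L Γ) ≤ S 0)
    {u u' : ℝ → E} (huderiv : ∀ x ∈ Ici (0 : ℝ), HasDerivWithinAt u (u' x) (Ici 0) x)
    (hu : IntegrableOn (fun x => ‖u x‖ ^ 2) (Ici 0))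
    (hf : IntegrableOn (fun x => ‖u' x - G x (u x)‖ ^ 2) (Ici 0)) :
    lam * (∫ x in Ici (0 : ℝ), ‖u x‖ ^ 2) + δ * ‖u 0‖ ^ 2 ≤
      C₀ ^ 2 / lam * (∫ x in Ici (0 : ℝ), ‖u' x - G x (u x)‖ ^ 2) + C₁ * ‖Γ (u 0)‖ ^ 2 := by
  have henergy_deriv := fun x hx =>
    hasDerivWithinAt_reApplyInnerSelf (hSsa x hx) (hSderiv x hx) (huderiv x hx)
  have henergy_int : IntegrableOn (fun x => (S x).reApplyInnerSelf (u x)) (Ici 0) :=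
    (hu.const_mul C₀).mono'
      (ContinuousOn.aestronglyMeasurable (fun x hx => (henergy_deriv x hx).continuousWithinAt)
        measurableSet_Ici)
      ((ae_restrict_iff' measurableSet_Ici).2 <| .of_forall fun x hx =>
        (abs_re_inner_apply_le (hSbound x hx) (u x) (u x)).trans_eq (by ring))
  have hinterior := integral_Ici_le_neg_of_le_deriv henergy_deriv
    (fun x hx => le_reApplyInnerSelf_add_two_mul_re_inner hlam (hSsa x hx) (hSbound x hx)
      (hpos x hx) (u x) (u' x))
    henergy_int ((hu.const_mul lam).sub (hf.const_mul (C₀ ^ 2 / lam)))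
  have hboundary := reApplyInnerSelf_mono hbdry (u 0)
  rw [integral_sub (hu.const_mul _) (hf.const_mul _), integral_const_mul, integral_const_mul]
    at hinterior
  simp only [reApplyInnerSelf_sub, reApplyInnerSelf_ofReal_smul, reApplyInnerSelf_one,
    reApplyInnerSelf_adjoint_comp_self] at hboundary
  linarith

end HilbertSpace

section Matrices

variable {𝕜 m n : Type*} [RCLike 𝕜] [Fintype m] [Fintype n] [DecidableEq n]

/-- `Matrix.toEuclideanCLM` as a continuous real-linear map on arrays of entries. The domain is the
product space rather than `Matrix n n 𝕜`, which carries no canonical norm. -/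
def entriesToEuclideanCLM (𝕜 n : Type*) [RCLike 𝕜] [Fintype n] [DecidableEq n] :
    (n → n → 𝕜) →L[ℝ] (EuclideanSpace 𝕜 n →L[𝕜] EuclideanSpace 𝕜 n) :=
  LinearMap.toContinuousLinearMap <|
    ((toEuclideanCLM (n := n) (𝕜 := 𝕜)).toAlgEquiv.toLinearMap ∘ₗ
      (ofLinearEquiv 𝕜).toLinearMap).restrictScalars ℝ

lemma continuousOn_toEuclideanCLM {X : Type*} [TopologicalSpace X] {A : X → Matrix n n 𝕜}
    {s : Set X} (hA : ∀ i j, ContinuousOn (fun x => A x i j) s) :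
    ContinuousOn (fun x => toEuclideanCLM (𝕜 := 𝕜) (A x)) s :=
  (entriesToEuclideanCLM 𝕜 n).continuous.comp_continuousOn
    (continuousOn_pi.2 fun i => continuousOn_pi.2 fun j => hA i j)

lemma hasDerivWithinAt_toEuclideanCLM {A : ℝ → Matrix n n 𝕜} {A' : Matrix n n 𝕜} {s : Set ℝ}
    {x : ℝ} (hA : ∀ i j, HasDerivWithinAt (fun y => A y i j) (A' i j) s x) :
    HasDerivWithinAt (fun y => toEuclideanCLM (𝕜 := 𝕜) (A y)) (toEuclideanCLM (𝕜 := 𝕜) A') s x :=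
  (entriesToEuclideanCLM 𝕜 n).hasFDerivAt.comp_hasDerivWithinAt x
    (hasDerivWithinAt_pi.2 fun i => hasDerivWithinAt_pi.2 fun j => hA i j)

lemma toEuclideanCLM_le_toEuclideanCLM_iff {A B : Matrix n n 𝕜} :
    toEuclideanCLM (𝕜 := 𝕜) A ≤ toEuclideanCLM (𝕜 := 𝕜) B ↔ (B - A).PosSemidef := by
  rw [ContinuousLinearMap.le_def, ← map_sub, ← isPositive_toLinearMap_iff,
    coe_toEuclideanCLM_eq_toEuclideanLin, isPositive_toEuclideanLin_iff]

lemma toEuclideanCLM_conjTranspose_mul_self (Γ : Matrix m n 𝕜) :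
    toEuclideanCLM (𝕜 := 𝕜) (Γᴴ * Γ) =
      (toEuclideanLin Γ).toContinuousLinearMap† ∘L (toEuclideanLin Γ).toContinuousLinearMap := by
  classical
  apply coe_injective
  rw [coe_toEuclideanCLM_eq_toEuclideanLin, toLpLin_mul_same,
    toEuclideanLin_conjTranspose_eq_adjoint, ← LinearMap.adjoint_toContinuousLinearMap]
  rfl

lemma smul_one_le_toEuclideanCLM_of_posSemidef {S G S' : Matrix n n 𝕜} {c : 𝕜}
    (h : (S * G + Gᴴ * S + S' - c • 1).PosSemidef) :
    c • 1 ≤ toEuclideanCLM (𝕜 := 𝕜) S * toEuclideanCLM (𝕜 := 𝕜) G +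
      star (toEuclideanCLM (𝕜 := 𝕜) G) * toEuclideanCLM (𝕜 := 𝕜) S +
        toEuclideanCLM (𝕜 := 𝕜) S' := by
  simpa only [map_add, map_mul, map_smul, map_one, ← star_eq_conjTranspose, map_star] using
    toEuclideanCLM_le_toEuclideanCLM_iff.2 h

lemma smul_one_sub_adjoint_comp_self_le_toEuclideanCLM_of_posSemidef
    {S : Matrix n n 𝕜} {Γ : Matrix m n 𝕜} {c d : 𝕜}
    (h : (S - c • 1 + d • (Γᴴ * Γ)).PosSemidef) :
    c • 1 - d • ((toEuclideanLin Γ).toContinuousLinearMap† ∘L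
      (toEuclideanLin Γ).toContinuousLinearMap) ≤ toEuclideanCLM (𝕜 := 𝕜) S := by
  rw [sub_add] at h
  simpa only [map_sub, map_smul, map_one, toEuclideanCLM_conjTranspose_mul_self] using
    toEuclideanCLM_le_toEuclideanCLM_iff.2 h

end Matrices

/-- Lemma 2.1, matrix case. The basic energy estimate produced by a
symmetrizer for a boundary value problem on the half line. -/
theorem symmetrizer_energy_estimate {n k : ℕ}
    (G S S' : ℝ → Matrix (Fin n) (Fin n) ℂ) (Γ : Matrix (Fin k) (Fin n) ℂ)
    (C₀ lam δ C₁ : ℝ) (hC₀ : 0 < C₀) (hlam : 0 < lam) (hδ : 0 < δ) (hC₁ : 0 ≤ C₁)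
    (hGcont : ∀ i j, ContinuousOn (fun x => G x i j) (Ici 0))
    (hSderiv : ∀ i j, ∀ x ∈ Ici (0 : ℝ),
      HasDerivWithinAt (fun y => S y i j) (S' x i j) (Ici 0) x)
    (hS'cont : ∀ i j, ContinuousOn (fun x => S' x i j) (Ici 0))
    (hSsa : ∀ x ∈ Ici (0 : ℝ), (S x)ᴴ = S x)
    (hSbound : ∀ x ∈ Ici (0 : ℝ), ‖Matrix.toEuclideanCLM (𝕜 := ℂ) (S x)‖ ≤ C₀)
    (hpos : ∀ x ∈ Ici (0 : ℝ),
      (S x * G x + (G x)ᴴ * S x + S' x -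
        ((2 * lam : ℝ) : ℂ) • (1 : Matrix (Fin n) (Fin n) ℂ)).PosSemidef)
    (hbdry : (S 0 - ((δ : ℝ) : ℂ) • (1 : Matrix (Fin n) (Fin n) ℂ) +
      ((C₁ : ℝ) : ℂ) • (Γᴴ * Γ)).PosSemidef) :
    ∀ u : ℝ → EuclideanSpace ℂ (Fin n), ContDiff ℝ 1 u → HasCompactSupport u →
      lam * (∫ x in Ici (0 : ℝ), ‖u x‖ ^ 2) + δ * ‖u 0‖ ^ 2 ≤
        (C₀ ^ 2 / lam) *
            (∫ x in Ici (0 : ℝ),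
              ‖deriv u x - Matrix.toEuclideanCLM (𝕜 := ℂ) (G x) (u x)‖ ^ 2) +
          C₁ * ‖Matrix.toEuclideanLin Γ (u 0)‖ ^ 2 := by
  intro u hu hsupp
  have hfcont : ContinuousOn (fun x => deriv u x - toEuclideanCLM (𝕜 := ℂ) (G x) (u x)) (Ici 0) :=
    (hu.continuous_deriv le_rfl).continuousOn.sub
      ((continuousOn_toEuclideanCLM hGcont).clm_apply hu.continuous.continuousOn)
  have hfsupp : HasCompactSupport fun x => deriv u x - toEuclideanCLM (𝕜 := ℂ) (G x) (u x) :=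
    hsupp.deriv.sub (hsupp.mono fun x hx hux => hx (by simp [hux]))
  exact symmetrizer_energy_estimate_general (Γ := (toEuclideanLin Γ).toContinuousLinearMap) hlam
    (fun x hx => hasDerivWithinAt_toEuclideanCLM fun i j => hSderiv i j x hx)
    (fun x hx => IsSelfAdjoint.map (hSsa x hx) toEuclideanCLM) hSbound
    (fun x hx => smul_one_le_toEuclideanCLM_of_posSemidef (hpos x hx))
    (smul_one_sub_adjoint_comp_self_le_toEuclideanCLM_of_posSemidef hbdry)
    (fun x _ => (hu.differentiable one_ne_zero x).hasDerivAt.hasDerivWithinAt)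
    (integrableOn_norm_sq_of_hasCompactSupport isClosed_Ici hu.continuous.continuousOn hsupp)
    (integrableOn_norm_sq_of_hasCompactSupport isClosed_Ici hfcont hfsupp)

end
end

section
/- Let G : [0, ∞) → M_n(ℂ) be continuous, G_∞ ∈ M_n(ℂ), and suppose there are C, θ > 0 with ‖G(x) − G_∞‖ ≤ C e^{−θx} for all x ≥ 0. Then there exist θ₁ > 0, C′ > 0 and a C¹ map W : [0, ∞) → GL_n(ℂ) such that: (i) sup_x ‖W(x)‖ < ∞ and sup_x ‖W(x)^{-1}‖ < ∞; (ii) ‖W(x) − Id‖ ≤ C′ e^{−θ₁ x} for all x ≥ 0; (iii) W′(x) = G(x) W(x) − W(x) G_∞ for all x ≥ 0. Consequently the substitution v(x) = W(x)^{-1} u(x) transforms any solution of u′ = G(x)u into a solution of v′ = G_∞ v. -/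
open Matrix Set

noncomputable section

/-!
Put `r = G - G_∞` and `W = 1 + v`. The equation `W' = G W - W G_∞` becomes `v' = ad v + r v + r`,
where `ad v = G_∞ v - v G_∞`, so an exponentially decaying `v` is needed. With `v = e^{-α x} w` the
weight turns `ad` into `ad + α`; pick `α ∈ (0, θ)` such that `ad + α` has no eigenvalue on
the imaginary axis. Splitting the minimal polynomial of `ad + α` into linear factors reduces the
bounded solvability of `w' = (ad + α) w + g` on the line to scalar equations `w' = μ w + g` with
`Re μ ≠ 0`.

The term `r w` is small only beyond some `M`. Freezing `r` before `M` makes it a small perturbation,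
absorbed by a Neumann series. The error is supported in `(-∞, M]` and is corrected by a solution
obtained in a weight `e^{-L x}` with `L` large; such a solution is bounded on `[0, ∞)`.

If `W(x₀) P = 0`, then `W(x) e^{(x - x₀) G_∞} P` solves `Y' = G Y` and vanishes at `x₀`, hence
everywhere; since `W(x)` is invertible for large `x`, `P = 0`. Thus `W(x₀)` is invertible.
-/

open BoundedContinuousFunction hiding C
open Filter MeasureTheory Polynomial Topology
open scoped Matrix.Norms.L2Operator Ring

section GreenOperator

variable {E : Type*} [NormedAddCommGroup E] [NormedSpace ℂ E]

/-- `K` is a Green operator for `d/dx - B` on bounded continuous functions on the line: `K g` is a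
bounded solution of `v' = B v + g`, chosen linearly and continuously in `g`. -/
def IsGreenOperator (B : ℝ → E →L[ℂ] E) (K : (ℝ →ᵇ E) →L[ℂ] (ℝ →ᵇ E)) : Prop :=
  ∀ g x, HasDerivAt (K g) (B x (K g x) + g x) x

lemma IsGreenOperator.reflect {B : ℝ → E →L[ℂ] E} {K : (ℝ →ᵇ E) →L[ℂ] (ℝ →ᵇ E)}
    (hK : IsGreenOperator B K) :
    IsGreenOperator (fun x => -B (-x))
      (-(compContinuousCLM E ℂ ⟨Neg.neg, continuous_neg⟩ ∘L K ∘L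
        compContinuousCLM E ℂ ⟨Neg.neg, continuous_neg⟩)) := by
  intro g x
  refine ((hK _ (-x)).scomp x (hasDerivAt_neg x)).neg.congr_deriv ?_
  simp [add_comm]

/-- The operator `v ↦ R v` of pointwise application of a bounded continuous family of operators. -/
def multiplicationOperator (R : ℝ →ᵇ E →L[ℂ] E) : (ℝ →ᵇ E) →L[ℂ] (ℝ →ᵇ E) :=
  LinearMap.mkContinuous
    { toFun v := .ofNormedAddCommGroup (fun x => R x (v x)) (R.continuous.clm_apply v.continuous)
        (‖R‖ * ‖v‖) fun x =>
          (R x).le_of_opNorm_le_of_le (R.norm_coe_le_norm x) (v.norm_coe_le_norm x)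
      map_add' v w := by ext; simp
      map_smul' c v := by ext; simp }
    ‖R‖ fun v => norm_ofNormedAddCommGroup_le _ (by positivity) fun x =>
      (R x).le_of_opNorm_le_of_le (R.norm_coe_le_norm x) (v.norm_coe_le_norm x)

@[simp]
lemma multiplicationOperator_apply (R : ℝ →ᵇ E →L[ℂ] E) (v : ℝ →ᵇ E) (x : ℝ) :
    multiplicationOperator R v x = R x (v x) :=
  rfl

lemma norm_multiplicationOperator_le (R : ℝ →ᵇ E →L[ℂ] E) : ‖multiplicationOperator R‖ ≤ ‖R‖ :=
  LinearMap.mkContinuous_norm_le _ (norm_nonneg R) _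

/-- The solution of `w' = μ w + g` given by variation of constants from `-∞`. The integral is
meaningful when `μ.re < 0` and `g` is bounded. -/
def solutionFromNegInfty (μ : ℂ) (g : ℝ → E) (x : ℝ) : E :=
  Complex.exp (μ * x) • ∫ s in Iic x, Complex.exp (-μ * s) • g s

variable {μ : ℂ}

lemma integrableOn_exp_neg_mul_smul (hμ : μ.re < 0) (g : ℝ →ᵇ E) (x : ℝ) :
    IntegrableOn (fun s : ℝ => Complex.exp (-μ * s) • g s) (Iic x) :=
  (integrableOn_exp_mul_complex_Iic (by simpa using hμ) x).smul_bdd ‖g‖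
    g.continuous.aestronglyMeasurable (Eventually.of_forall g.norm_coe_le_norm)

lemma hasDerivAt_integral_Iic [CompleteSpace E] {f : ℝ → E} (hf : Continuous f)
    (hint : ∀ x, IntegrableOn f (Iic x)) (x : ℝ) :
    HasDerivAt (fun y => ∫ s in Iic y, f s) (f x) x := by
  have hsplit : (fun y => ∫ s in Iic y, f s) =
      fun y => (∫ s in (0 : ℝ)..y, f s) + ∫ s in Iic (0 : ℝ), f s := by
    funext y
    rw [← intervalIntegral.integral_Iic_sub_Iic (hint 0) (hint y), sub_add_cancel]
  rw [hsplit]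
  exact (hf.integral_hasStrictDerivAt 0 x).hasDerivAt.add_const _

lemma hasDerivAt_solutionFromNegInfty [CompleteSpace E] (hμ : μ.re < 0) (g : ℝ →ᵇ E) (x : ℝ) :
    HasDerivAt (solutionFromNegInfty μ g) (μ • solutionFromNegInfty μ g x + g x) x := by
  have hcont : Continuous fun s : ℝ => Complex.exp (-μ * s) • g s := by fun_prop
  have hint := hasDerivAt_integral_Iic hcont (integrableOn_exp_neg_mul_smul hμ g) x
  have hexp : HasDerivAt (fun y : ℝ => Complex.exp (μ * y)) (Complex.exp (μ * x) * μ) x := by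
    simpa using ((Complex.ofRealCLM.hasDerivAt (x := x)).const_mul μ).cexp
  refine (hexp.smul hint).congr_deriv ?_
  have hcancel : Complex.exp (μ * x) * Complex.exp (-μ * x) = 1 := by
    rw [← Complex.exp_add, neg_mul, add_neg_cancel, Complex.exp_zero]
  rw [solutionFromNegInfty, smul_smul, smul_smul, hcancel, one_smul, add_comm,
    mul_comm (Complex.exp _) μ]

lemma norm_solutionFromNegInfty_le (hμ : μ.re < 0) (g : ℝ →ᵇ E) (x : ℝ) :
    ‖solutionFromNegInfty μ g x‖ ≤ 1 / |μ.re| * ‖g‖ := by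
  have hre : 0 < -μ.re := neg_pos.2 hμ
  have hintegral : ‖∫ s in Iic x, Complex.exp (-μ * s) • g s‖ ≤
      Real.exp (-μ.re * x) / -μ.re * ‖g‖ := by
    rw [← integral_exp_mul_Iic hre, ← integral_mul_const]
    refine norm_integral_le_of_norm_le ((integrableOn_exp_mul_Iic hre x).mul_const _)
      (Eventually.of_forall fun s => ?_)
    rw [norm_smul, Complex.norm_exp, Complex.re_mul_ofReal, Complex.neg_re]
    gcongr
    exact g.norm_coe_le_norm s
  rw [solutionFromNegInfty, norm_smul, Complex.norm_exp, Complex.re_mul_ofReal, abs_of_neg hμ]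
  calc Real.exp (μ.re * x) * ‖∫ s in Iic x, Complex.exp (-μ * s) • g s‖
      ≤ Real.exp (μ.re * x) * (Real.exp (-μ.re * x) / -μ.re * ‖g‖) := by gcongr
    _ = Real.exp (μ.re * x + -μ.re * x) * (1 / -μ.re * ‖g‖) := by rw [Real.exp_add]; ring
    _ = 1 / -μ.re * ‖g‖ := by rw [neg_mul, add_neg_cancel, Real.exp_zero, one_mul]

lemma solutionFromNegInfty_add (hμ : μ.re < 0) (f g : ℝ →ᵇ E) (x : ℝ) :
    solutionFromNegInfty μ (f + g) x =
      solutionFromNegInfty μ f x + solutionFromNegInfty μ g x := by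
  simp only [solutionFromNegInfty, BoundedContinuousFunction.add_apply, smul_add]
  rw [integral_add (integrableOn_exp_neg_mul_smul hμ f x) (integrableOn_exp_neg_mul_smul hμ g x),
    smul_add]

lemma solutionFromNegInfty_smul (c : ℂ) (g : ℝ → E) (x : ℝ) :
    solutionFromNegInfty μ (c • g) x = c • solutionFromNegInfty μ g x := by
  simp only [solutionFromNegInfty, Pi.smul_apply, smul_comm _ c]
  rw [integral_smul, smul_comm]

variable [CompleteSpace E]

lemma exists_isGreenOperator_smul_one_of_re_neg (hμ : μ.re < 0) :
    ∃ K : (ℝ →ᵇ E) →L[ℂ] (ℝ →ᵇ E),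
      ‖K‖ ≤ 1 / |μ.re| ∧ IsGreenOperator (fun _ => μ • 1) K := by
  let S : (ℝ →ᵇ E) →ₗ[ℂ] (ℝ →ᵇ E) :=
    { toFun g := .ofNormedAddCommGroup (solutionFromNegInfty μ g)
        (continuous_iff_continuousAt.2 fun x =>
          (hasDerivAt_solutionFromNegInfty hμ g x).continuousAt)
        _ (norm_solutionFromNegInfty_le hμ g)
      map_add' f g := by ext x; exact solutionFromNegInfty_add hμ f g x
      map_smul' c g := by ext x; exact solutionFromNegInfty_smul c g x }
  refine ⟨S.mkContinuous (1 / |μ.re|) fun g => ?_, S.mkContinuous_norm_le (by positivity) _,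
    fun g x => hasDerivAt_solutionFromNegInfty hμ g x⟩
  exact norm_ofNormedAddCommGroup_le _ (by positivity) (norm_solutionFromNegInfty_le hμ g)

lemma exists_isGreenOperator_smul_one (hμ : μ.re ≠ 0) :
    ∃ K : (ℝ →ᵇ E) →L[ℂ] (ℝ →ᵇ E),
      ‖K‖ ≤ 1 / |μ.re| ∧ IsGreenOperator (fun _ => μ • 1) K := by
  rcases hμ.lt_or_gt with hneg | hpos
  · exact exists_isGreenOperator_smul_one_of_re_neg hneg
  · obtain ⟨K, hK, hgreen⟩ :=
      exists_isGreenOperator_smul_one_of_re_neg (E := E) (μ := -μ) (by simpa using hpos)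
    refine ⟨_, ?_, by simpa using hgreen.reflect⟩
    have hρ := norm_compContinuousCLM_le_one (β := E) (𝕜 := ℂ)
      (⟨Neg.neg, continuous_neg⟩ : C(ℝ, ℝ))
    rw [norm_neg]
    refine (ContinuousLinearMap.opNorm_comp_le _ _).trans <|
      (mul_le_of_le_one_left (norm_nonneg _) hρ).trans <|
      (ContinuousLinearMap.opNorm_comp_le _ _).trans <|
      (mul_le_of_le_one_right (norm_nonneg _) hρ).trans ?_
    simpa using hK

-- Writing `D = d/dx`, this is the factorization `p(D) - p(B) = (D - B) q(D, B)`, with `U = p(D)⁻¹`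
-- and `K = q(D, B) U`.
lemma exists_green_modulo_aeval_prod (B : E →L[ℂ] E) (s : Multiset ℂ) (hs : ∀ μ ∈ s, μ.re ≠ 0) :
    ∃ K U : (ℝ →ᵇ E) →L[ℂ] (ℝ →ᵇ E), ∀ g x, HasDerivAt (K g)
      (B (K g x) + g x - aeval B (s.map fun μ => X - C μ).prod (U g x)) x := by
  induction s using Multiset.induction_on with
  | empty => exact ⟨0, .id _ _, fun g x => by simp⟩
  | cons μ s ih =>
    obtain ⟨K, U, hKU⟩ := ih fun ν hν => hs ν (Multiset.mem_cons_of_mem hν)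
    obtain ⟨S, -, hS⟩ :=
      exists_isGreenOperator_smul_one (E := E) (hs μ (Multiset.mem_cons_self μ s))
    set P := aeval B (s.map fun μ => X - C μ).prod with hP
    refine ⟨K + P.compLeftContinuousBounded ℝ ∘L S ∘L U, S ∘L U, fun g x => ?_⟩
    have hPS := (P.restrictScalars ℝ).hasFDerivAt.comp_hasDerivAt x (hS (U g) x)
    refine ((hKU g x).add hPS).congr_deriv ?_
    rw [Multiset.map_cons, Multiset.prod_cons, map_mul, ← hP]
    simp only [_root_.smul_apply, one_apply_eq_self, ContinuousLinearMap.coe_restrictScalars',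
      map_add, map_smul, sub_add_add_cancel, _root_.add_apply, ContinuousLinearMap.comp_apply,
      BoundedContinuousFunction.coe_add, Pi.add_apply,
      ContinuousLinearMap.compLeftContinuousBounded_apply, aeval_sub, aeval_X, aeval_C,
      Algebra.algebraMap_eq_smul_one, mul_apply_eq_comp, _root_.sub_apply]
    abel

lemma exists_isGreenOperator_of_aeval_eq_zero {B : E →L[ℂ] E} {p : ℂ[X]} (hp : p.Monic)
    (hpB : aeval B p = 0) (hroots : ∀ μ ∈ p.roots, μ.re ≠ 0) :
    ∃ K, IsGreenOperator (fun _ => B) K := by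
  obtain ⟨K, U, hKU⟩ := exists_green_modulo_aeval_prod B p.roots hroots
  rw [← (IsAlgClosed.splits p).eq_prod_roots_of_monic hp, hpB] at hKU
  exact ⟨K, fun g x => by simpa using hKU g x⟩

lemma exists_isGreenOperator_add_smul_one {A : E →L[ℂ] E} (hA : IsIntegral ℂ A) {θ : ℝ}
    (hθ : 0 < θ) :
    ∃ α ∈ Ioo 0 θ, ∃ K, IsGreenOperator (fun _ => A + (α : ℂ) • 1) K := by
  obtain ⟨α, hα, hα_ne⟩ := ((Ioo_infinite hθ).sdiff
    ((minpoly ℂ A).roots.toFinset.finite_toSet.image fun μ => -μ.re)).nonempty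
  refine ⟨α, hα, exists_isGreenOperator_of_aeval_eq_zero
    (p := (minpoly ℂ A).comp (X - C (α : ℂ))) ((minpoly.monic hA).comp_X_sub_C _) ?_ ?_⟩
  · simp [aeval_comp, Algebra.algebraMap_eq_smul_one]
  · intro μ hμ hμ_re
    have hroot : (minpoly ℂ A).IsRoot (μ - α) := by
      simpa [IsRoot, eval_comp] using isRoot_of_mem_roots hμ
    refine hα_ne ⟨μ - α, ?_, by simp [hμ_re]⟩
    simpa [minpoly.ne_zero hA] using hroot

lemma IsGreenOperator.exists_add {B : ℝ → E →L[ℂ] E} {K : (ℝ →ᵇ E) →L[ℂ] (ℝ →ᵇ E)}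
    (hK : IsGreenOperator B K) {R : ℝ →ᵇ E →L[ℂ] E} (hR : ‖R‖ * ‖K‖ < 1) :
    ∃ K', IsGreenOperator (B + ⇑R) K' := by
  let T := multiplicationOperator R ∘L K
  have hT : ‖T‖ < 1 := (ContinuousLinearMap.opNorm_comp_le _ _).trans_lt <|
    (mul_le_mul_of_nonneg_right (norm_multiplicationOperator_le R) (norm_nonneg K)).trans_lt hR
  let N : (ℝ →ᵇ E) →L[ℂ] (ℝ →ᵇ E) := ↑(Units.oneSub T hT)⁻¹
  refine ⟨K ∘L N, fun g x => (hK (N g) x).congr_deriv ?_⟩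
  have hN : N g - T (N g) = g := DFunLike.congr_fun (Units.oneSub T hT).mul_inv g
  have hNx : N g x = R x (K (N g) x) + g x := by
    rw [← sub_eq_iff_eq_add']
    exact DFunLike.congr_fun hN x
  simp [hNx, add_assoc]

lemma exists_isGreenOperator_add_smul_one_of_norm_lt {B : ℝ →ᵇ E →L[ℂ] E} {L : ℝ} (hL : ‖B‖ < L) :
    ∃ K, IsGreenOperator (fun x => B x + (L : ℂ) • 1) K := by
  have hLpos : 0 < L := (norm_nonneg B).trans_lt hL
  obtain ⟨S, hS, hgreen⟩ :=
    exists_isGreenOperator_smul_one (E := E) (μ := L) (by simpa using hLpos.ne')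
  have hBS : ‖B‖ * ‖S‖ < 1 := by
    rw [Complex.ofReal_re, abs_of_pos hLpos] at hS
    calc ‖B‖ * ‖S‖ ≤ ‖B‖ * (1 / L) := by gcongr
      _ < 1 := by rwa [mul_one_div, div_lt_one hLpos]
  obtain ⟨K, hK⟩ := hgreen.exists_add hBS
  exact ⟨K, fun g x => by simpa [add_comm] using hK g x⟩

end GreenOperator

section BoundedSolutions

variable {E : Type*} [NormedAddCommGroup E] [NormedSpace ℂ E]

lemma hasDerivAt_exp_neg_mul_smul {B : E →L[ℂ] E} {v : ℝ → E} {f : E} {L x : ℝ}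
    (hv : HasDerivAt v ((B + (L : ℂ) • 1) (v x) + f) x) :
    HasDerivAt (fun y => Real.exp (-L * y) • v y)
      (B (Real.exp (-L * x) • v x) + Real.exp (-L * x) • f) x := by
  have hexp : HasDerivAt (fun y => Real.exp (-L * y)) (Real.exp (-L * x) * -L) x := by
    simpa using ((hasDerivAt_id x).const_mul (-L)).exp
  refine (hexp.smul hv).congr_deriv ?_
  have hB : B (Real.exp (-L * x) • v x) = Real.exp (-L * x) • B (v x) :=
    (B.restrictScalars ℝ).map_smul _ _
  have hL : ((L : ℂ) • (1 : E →L[ℂ] E)) (v x) = L • v x := rfl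
  rw [hB, _root_.add_apply, hL]
  module

lemma norm_exp_neg_mul_smul_le {F : Type*} [SeminormedAddCommGroup F] [NormedSpace ℝ F] {L x : ℝ}
    (hL : 0 ≤ L) (hx : 0 ≤ x) (v : F) : ‖Real.exp (-L * x) • v‖ ≤ ‖v‖ := by
  rw [norm_smul, Real.norm_eq_abs, Real.abs_exp]
  exact mul_le_of_le_one_left (norm_nonneg v)
    (Real.exp_le_one_iff.2 (mul_nonpos_of_nonpos_of_nonneg (neg_nonpos.2 hL) hx))

lemma exists_boundedContinuous_exp_smul {F : Type*} [NormedAddCommGroup F] [NormedSpace ℝ F]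
    {h : ℝ →ᵇ F} {L M : ℝ} (hL : 0 ≤ L) (hM : ∀ x, M ≤ x → h x = 0) :
    ∃ q : ℝ →ᵇ F, ∀ x, q x = Real.exp (L * x) • h x := by
  refine ⟨.ofNormedAddCommGroup (fun x => Real.exp (L * x) • h x) (by fun_prop)
    (Real.exp (L * M) * ‖h‖) fun x => ?_, fun _ => rfl⟩
  rcases le_total M x with hMx | hxM
  · rw [hM x hMx, smul_zero, norm_zero]
    positivity
  · rw [norm_smul, Real.norm_eq_abs, Real.abs_exp]
    gcongr
    exact h.norm_coe_le_norm x

lemma exists_solution_of_eq_zero_of_le [CompleteSpace E] (B : ℝ →ᵇ E →L[ℂ] E)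
    {h : ℝ →ᵇ E} {M : ℝ} (hM : ∀ x, M ≤ x → h x = 0) :
    ∃ z : ℝ → E, (∃ c, ∀ x, 0 ≤ x → ‖z x‖ ≤ c) ∧
      ∀ x, HasDerivAt z (B x (z x) + h x) x := by
  obtain ⟨L, hBL⟩ := exists_gt ‖B‖
  have hL : 0 ≤ L := (norm_nonneg B).trans hBL.le
  obtain ⟨K, hK⟩ := exists_isGreenOperator_add_smul_one_of_norm_lt hBL
  obtain ⟨q, hq⟩ := exists_boundedContinuous_exp_smul hL hM
  refine ⟨fun x => Real.exp (-L * x) • K q x, ⟨‖K q‖, fun x hx =>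
    (norm_exp_neg_mul_smul_le hL hx _).trans ((K q).norm_coe_le_norm x)⟩, fun x => ?_⟩
  have hcancel : Real.exp (-L * x) • q x = h x := by
    rw [hq, smul_smul, ← Real.exp_add, neg_mul, neg_add_cancel, Real.exp_zero, one_smul]
  simpa only [hcancel] using hasDerivAt_exp_neg_mul_smul (hK q x)

/-- The function that agrees with `R` on `[M, ∞)` and is constant before `M`. -/
def freezeBefore {F : Type*} [PseudoMetricSpace F] (R : ℝ →ᵇ F) (M : ℝ) : ℝ →ᵇ F :=
  R.compContinuous ⟨fun x => max x M, by fun_prop⟩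

lemma freezeBefore_of_le {F : Type*} [PseudoMetricSpace F] (R : ℝ →ᵇ F) {M x : ℝ} (h : M ≤ x) :
    freezeBefore R M x = R x :=
  congrArg R (max_eq_left h)

lemma exists_norm_freezeBefore_le {F : Type*} [NormedAddCommGroup F] {R : ℝ →ᵇ F}
    (hR : Tendsto R atTop (𝓝 0)) {ε : ℝ} (hε : 0 < ε) : ∃ M, ‖freezeBefore R M‖ ≤ ε := by
  obtain ⟨M, hM⟩ := eventually_atTop.1 (hR.norm.eventually_le_const (by simpa using hε))
  exact ⟨M, (norm_le hε.le).2 fun x => hM _ (le_max_right x M)⟩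

theorem IsGreenOperator.exists_solution_of_tendsto_zero [CompleteSpace E]
    {B R : ℝ →ᵇ E →L[ℂ] E} {K : (ℝ →ᵇ E) →L[ℂ] (ℝ →ᵇ E)} (hK : IsGreenOperator B K)
    (hR : Tendsto R atTop (𝓝 0)) (f : ℝ →ᵇ E) :
    ∃ v : ℝ → E, (∃ c, ∀ x, 0 ≤ x → ‖v x‖ ≤ c) ∧
      ∀ x, HasDerivAt v ((B + R) x (v x) + f x) x := by
  obtain ⟨M, hM⟩ := exists_norm_freezeBefore_le hR (ε := (‖K‖ + 1)⁻¹) (by positivity)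
  have hsmall : ‖freezeBefore R M‖ * ‖K‖ < 1 := by
    calc ‖freezeBefore R M‖ * ‖K‖ ≤ (‖K‖ + 1)⁻¹ * ‖K‖ := by gcongr
      _ < 1 := by rw [inv_mul_lt_one₀ (by positivity)]; exact lt_add_one _
  obtain ⟨K', hK'⟩ := hK.exists_add hsmall
  obtain ⟨z, ⟨c, hc⟩, hz⟩ := exists_solution_of_eq_zero_of_le (B + R)
    (h := multiplicationOperator (R - freezeBefore R M) (K' f)) (M := M)
    fun x hx => by simp [freezeBefore_of_le R hx]
  refine ⟨K' f + z, ⟨‖K' f‖ + c, fun x hx =>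
    norm_add_le_of_le ((K' f).norm_coe_le_norm x) (hc x hx)⟩, fun x => ?_⟩
  refine ((hK' f x).add (hz x)).congr_deriv ?_
  simp only [Pi.add_apply, _root_.add_apply, BoundedContinuousFunction.coe_add, map_add,
    multiplicationOperator_apply, BoundedContinuousFunction.coe_sub, Pi.sub_apply, _root_.sub_apply]
  abel

end BoundedSolutions

section DecayingSolutions

lemma exists_norm_le_of_tendsto_atTop {F : Type*} [SeminormedAddCommGroup F] {f : ℝ → F} {l : F}
    (hf : ContinuousOn f (Ici 0)) (hl : Tendsto f atTop (𝓝 l)) :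
    ∃ c, ∀ x ∈ Ici (0 : ℝ), ‖f x‖ ≤ c := by
  obtain ⟨X, hX⟩ := eventually_atTop.1 (hl.norm.eventually_le_const (lt_add_one ‖l‖))
  obtain ⟨b, hb⟩ := (isCompact_Icc (a := (0 : ℝ)) (b := X)).exists_bound_of_continuousOn
    (hf.mono Icc_subset_Ici_self)
  refine ⟨max b (‖l‖ + 1), fun x hx => ?_⟩
  rcases le_total x X with hxX | hXx
  · exact (hb x ⟨hx, hxX⟩).trans (le_max_left _ _)
  · exact (hX x hXx).trans (le_max_right _ _)

lemma exists_boundedContinuous_eqOn_Ici {F : Type*} [SeminormedAddCommGroup F] {f : ℝ → F} {c : ℝ}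
    (hf : ContinuousOn f (Ici 0)) (hc : ∀ x ∈ Ici (0 : ℝ), ‖f x‖ ≤ c) :
    ∃ g : ℝ →ᵇ F, EqOn g f (Ici 0) :=
  ⟨.ofNormedAddCommGroup (fun x => f (max x 0))
    (hf.comp_continuous (by fun_prop) fun x => le_max_right x 0) c fun x => hc _ (le_max_right x 0),
    fun _ hx => congrArg f (max_eq_left hx)⟩

lemma tendsto_const_mul_exp_neg_mul_atTop {θ : ℝ} (hθ : 0 < θ) (c : ℝ) :
    Tendsto (fun x => c * Real.exp (-θ * x)) atTop (𝓝 0) := by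
  simpa using (Real.tendsto_exp_atBot.comp
    (tendsto_id.const_mul_atTop_of_neg (neg_neg_iff_pos.2 hθ))).const_mul c

lemma tendsto_of_norm_sub_le_exp {F : Type*} [SeminormedAddCommGroup F] {f : ℝ → F} {l : F}
    {c θ : ℝ} (hθ : 0 < θ) (hf : ∀ x ∈ Ici (0 : ℝ), ‖f x - l‖ ≤ c * Real.exp (-θ * x)) :
    Tendsto f atTop (𝓝 l) :=
  tendsto_iff_norm_sub_tendsto_zero.2 <| squeeze_zero' (.of_forall fun _ => norm_nonneg _)
    ((eventually_ge_atTop 0).mono hf) (tendsto_const_mul_exp_neg_mul_atTop hθ c)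

lemma norm_exp_mul_smul_le {F : Type*} [SeminormedAddCommGroup F] [NormedSpace ℝ F]
    {α θ x c : ℝ} {v : F} (hα : α ≤ θ) (hx : 0 ≤ x) (hv : ‖v‖ ≤ c * Real.exp (-θ * x)) :
    ‖Real.exp (α * x) • v‖ ≤ c := by
  rw [norm_smul, Real.norm_eq_abs, Real.abs_exp]
  calc Real.exp (α * x) * ‖v‖ ≤ Real.exp (θ * x) * (c * Real.exp (-θ * x)) := by gcongr
    _ = c * Real.exp (θ * x + -θ * x) := by rw [Real.exp_add, mul_left_comm]
    _ = c := by rw [neg_mul, add_neg_cancel, Real.exp_zero, mul_one]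

theorem exists_solution_norm_le_exp {E : Type*} [NormedAddCommGroup E] [NormedSpace ℂ E]
    [CompleteSpace E] {A : E →L[ℂ] E} (hA : IsIntegral ℂ A) {R : ℝ → E →L[ℂ] E}
    (hR : ContinuousOn R (Ici 0)) (hR_lim : Tendsto R atTop (𝓝 0))
    {f : ℝ → E} (hf : ContinuousOn f (Ici 0)) {c θ : ℝ} (hθ : 0 < θ)
    (hfc : ∀ x ∈ Ici (0 : ℝ), ‖f x‖ ≤ c * Real.exp (-θ * x)) :
    ∃ α > 0, ∃ b, ∃ v : ℝ → E, ∀ x ∈ Ici (0 : ℝ),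
      ‖v x‖ ≤ b * Real.exp (-α * x) ∧ HasDerivAt v ((A + R x) (v x) + f x) x := by
  obtain ⟨α, hα, K, hK⟩ := exists_isGreenOperator_add_smul_one hA hθ
  obtain ⟨r, hr⟩ := exists_norm_le_of_tendsto_atTop hR hR_lim
  obtain ⟨S, hS⟩ := exists_boundedContinuous_eqOn_Ici hR hr
  obtain ⟨g, hg⟩ := exists_boundedContinuous_eqOn_Ici (f := fun x => Real.exp (α * x) • f x)
    (by fun_prop) fun x hx => norm_exp_mul_smul_le hα.2.le hx (hfc x hx)
  have hS_lim : Tendsto S atTop (𝓝 0) :=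
    hR_lim.congr' ((eventually_ge_atTop 0).mono fun x hx => (hS hx).symm)
  obtain ⟨w, ⟨b, hb⟩, hw⟩ := IsGreenOperator.exists_solution_of_tendsto_zero
    (B := .const ℝ (A + (α : ℂ) • 1)) hK hS_lim g
  refine ⟨α, hα.1, b, fun x => Real.exp (-α * x) • w x, fun x hx => ⟨?_, ?_⟩⟩
  · rw [norm_smul, Real.norm_eq_abs, Real.abs_exp, mul_comm]
    gcongr
    exact hb x hx
  · have hw' : HasDerivAt w ((A + R x + (α : ℂ) • 1) (w x) + Real.exp (α * x) • f x) x := by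
      refine (hw x).congr_deriv ?_
      rw [BoundedContinuousFunction.add_apply, const_apply, hS hx, hg hx, add_right_comm]
    simpa [smul_smul, ← Real.exp_add] using hasDerivAt_exp_neg_mul_smul hw'

end DecayingSolutions

section BanachAlgebra

variable {𝔸 : Type*} [NormedRing 𝔸]

lemma eqOn_zero_of_hasDerivAt_mul [NormedAlgebra ℝ 𝔸] {G Y : ℝ → 𝔸} {x₀ : ℝ}
    (hG : ContinuousOn G (Ici x₀)) (hY : ∀ x ∈ Ici x₀, HasDerivAt Y (G x * Y x) x)
    (h₀ : Y x₀ = 0) : EqOn Y 0 (Ici x₀) := by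
  intro X hX
  obtain ⟨b, hb⟩ := (isCompact_Icc (a := x₀) (b := X)).exists_bound_of_continuousOn
    (hG.mono Icc_subset_Ici_self)
  refine eq_zero_of_abs_deriv_le_mul_abs_self_of_eq_zero_right (K := b) (f' := fun x => G x * Y x)
    (fun x hx => (hY x hx.1).continuousAt.continuousWithinAt)
    (fun x hx => (hY x hx.1).hasDerivWithinAt) h₀ (fun x hx => ?_) X ⟨hX, le_rfl⟩
  exact norm_mul_le_of_le (hb x ⟨hx.1, hx.2.le⟩) le_rfl

section Intertwiner

variable [NormedAlgebra ℝ 𝔸] {G W : ℝ → 𝔸} {a : 𝔸}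

lemma hasDerivAt_mul_exp_smul_mul [CompleteSpace 𝔸] {x : ℝ} (x₀ : ℝ) (P : 𝔸)
    (hW : HasDerivAt W (G x * W x - W x * a) x) :
    HasDerivAt (fun y => W y * (NormedSpace.exp ((y - x₀) • a) * P))
      (G x * (W x * (NormedSpace.exp ((x - x₀) • a) * P))) x := by
  have hexp : HasDerivAt (fun y : ℝ => NormedSpace.exp ((y - x₀) • a))
      (a * NormedSpace.exp ((x - x₀) • a)) x := by
    simpa using! (hasDerivAt_exp_smul_const' a (x - x₀)).scomp x ((hasDerivAt_id x).sub_const x₀)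
  refine (hW.mul (hexp.mul_const P)).congr_deriv ?_
  noncomm_ring

lemma eq_zero_of_mul_eq_zero_of_hasDerivAt [CompleteSpace 𝔸] {x₀ X : ℝ} {P : 𝔸}
    (hG : ContinuousOn G (Ici x₀))
    (hW : ∀ x ∈ Ici x₀, HasDerivAt W (G x * W x - W x * a) x) (hX : x₀ ≤ X)
    (hunit : IsUnit (W X)) (hP : W x₀ * P = 0) : P = 0 := by
  have hvanish : W X * (NormedSpace.exp ((X - x₀) • a) * P) = 0 :=
    eqOn_zero_of_hasDerivAt_mul hG (fun x hx => hasDerivAt_mul_exp_smul_mul x₀ P (hW x hx))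
      (by simpa using hP) hX
  let _ : NormedAlgebra ℚ 𝔸 := NormedAlgebra.restrictScalars ℚ ℝ 𝔸
  exact (NormedSpace.isUnit_exp _).mul_right_eq_zero.1 (hunit.mul_right_eq_zero.1 hvanish)

theorem isUnit_of_hasDerivAt_of_tendsto_one [FiniteDimensional ℝ 𝔸]
    (hG : ContinuousOn G (Ici 0)) (hW : ∀ x ∈ Ici (0 : ℝ), HasDerivAt W (G x * W x - W x * a) x)
    (hlim : Tendsto W atTop (𝓝 1)) {x : ℝ} (hx : x ∈ Ici (0 : ℝ)) : IsUnit (W x) := by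
  have : CompleteSpace 𝔸 := FiniteDimensional.complete ℝ 𝔸
  have : IsArtinianRing 𝔸ᵐᵒᵖ := IsArtinianRing.of_finite ℝ 𝔸ᵐᵒᵖ
  obtain ⟨X, hXunit, hxX⟩ := ((hlim.eventually (Units.isOpen.mem_nhds isUnit_one)).and
    (eventually_ge_atTop x)).exists
  have hsub : Ici x ⊆ Ici 0 := Ici_subset_Ici.2 hx
  refine IsArtinianRing.isUnit_iff_isLeftRegular.2 (isLeftRegular_of_non_zero_divisor _ fun P => ?_)
  exact eq_zero_of_mul_eq_zero_of_hasDerivAt (hG.mono hsub) (fun y hy => hW y (hsub hy)) hxX hXunit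

lemma hasDerivAt_ringInverse_of_isUnit [CompleteSpace 𝔸] {g : 𝔸} {x : ℝ}
    (hW : HasDerivAt W (g * W x - W x * a) x) (hunit : IsUnit (W x)) :
    HasDerivAt (fun y => (W y)⁻¹ʳ) (a * (W x)⁻¹ʳ - (W x)⁻¹ʳ * g) x := by
  have hinv : HasFDerivAt Ring.inverse (-ContinuousLinearMap.mulLeftRight ℝ 𝔸 (W x)⁻¹ʳ (W x)⁻¹ʳ)
      (W x) := by
    obtain ⟨w, hw⟩ := hunit
    simpa [← hw] using hasFDerivAt_ringInverse (𝕜 := ℝ) w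
  refine (hinv.comp_hasDerivAt x hW).congr_deriv ?_
  simp only [_root_.neg_apply, ContinuousLinearMap.mulLeftRight_apply, mul_sub, sub_mul, mul_assoc,
    Ring.mul_inverse_cancel _ hunit, Ring.inverse_mul_cancel_left _ _ hunit, mul_one, neg_sub]

end Intertwiner

lemma exists_norm_ringInverse_le [CompleteSpace 𝔸] {W : ℝ → 𝔸} (hW : ContinuousOn W (Ici 0))
    (hunit : ∀ x ∈ Ici (0 : ℝ), IsUnit (W x)) (hlim : Tendsto W atTop (𝓝 1)) :
    ∃ c, ∀ x ∈ Ici (0 : ℝ), ‖(W x)⁻¹ʳ‖ ≤ c := by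
  have hcont : ContinuousOn (fun x => (W x)⁻¹ʳ) (Ici 0) := fun x hx => by
    obtain ⟨w, hw⟩ := hunit x hx
    exact (hw ▸ NormedRing.inverse_continuousAt w).comp_continuousWithinAt (hW x hx)
  have hinv_lim : Tendsto (fun x => (W x)⁻¹ʳ) atTop (𝓝 (1 : 𝔸)⁻¹ʳ) :=
    (NormedRing.inverse_continuousAt (1 : 𝔸ˣ)).tendsto.comp hlim
  exact exists_norm_le_of_tendsto_atTop hcont hinv_lim

variable [NormedAlgebra ℂ 𝔸] [FiniteDimensional ℂ 𝔸]

theorem exists_intertwiner_norm_sub_one_le_exp {G : ℝ → 𝔸} {a : 𝔸} (hG : ContinuousOn G (Ici 0))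
    {c θ : ℝ} (hθ : 0 < θ) (hdecay : ∀ x ∈ Ici (0 : ℝ), ‖G x - a‖ ≤ c * Real.exp (-θ * x)) :
    ∃ α > 0, ∃ b > 0, ∃ W : ℝ → 𝔸, ∀ x ∈ Ici (0 : ℝ),
      ‖W x - 1‖ ≤ b * Real.exp (-α * x) ∧ HasDerivAt W (G x * W x - W x * a) x := by
  have : CompleteSpace 𝔸 := FiniteDimensional.complete ℂ 𝔸
  let L := ContinuousLinearMap.mul ℂ 𝔸
  have hsub : ContinuousOn (fun x => G x - a) (Ici 0) := hG.sub continuousOn_const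
  have hsub_lim : Tendsto (fun x => L (G x - a)) atTop (𝓝 0) :=
    (L.continuous.tendsto' 0 0 L.map_zero).comp
      (tendsto_sub_nhds_zero_iff.2 (tendsto_of_norm_sub_le_exp hθ hdecay))
  obtain ⟨α, hα, b, v, hv⟩ := exists_solution_norm_le_exp
    (Algebra.IsIntegral.isIntegral (R := ℂ) (L a - L.flip a))
    (L.continuous.comp_continuousOn hsub) hsub_lim hsub hθ hdecay
  refine ⟨α, hα, max b 1, by positivity, fun x => 1 + v x, fun x hx => ⟨?_, ?_⟩⟩
  · rw [add_sub_cancel_left]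
    exact (hv x hx).1.trans (by gcongr; exact le_max_left b 1)
  · refine ((hv x hx).2.const_add 1).congr_deriv ?_
    simp only [L, _root_.add_apply, _root_.sub_apply, Function.comp_apply,
      ContinuousLinearMap.mul_apply', ContinuousLinearMap.flip_apply]
    noncomm_ring

theorem hasDerivWithinAt_ringInverse_apply {E : Type*} [NormedAddCommGroup E] [NormedSpace ℂ E]
    (ρ : 𝔸 →ₐ[ℂ] (E →L[ℂ] E)) {W : ℝ → 𝔸} {u : ℝ → E} {g a : 𝔸} {x : ℝ} {s : Set ℝ}
    (hW : HasDerivAt W (g * W x - W x * a) x) (hunit : IsUnit (W x))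
    (hu : HasDerivWithinAt u (ρ g (u x)) s x) :
    HasDerivWithinAt (fun y => ρ (W y)⁻¹ʳ (u y)) (ρ a (ρ (W x)⁻¹ʳ (u x))) s x := by
  have : CompleteSpace 𝔸 := FiniteDimensional.complete ℂ 𝔸
  let ρR : 𝔸 →L[ℝ] (E →L[ℝ] E) := (ContinuousLinearMap.restrictScalarsL ℂ E E ℝ ℝ) ∘L
    ρ.toLinearMap.toContinuousLinearMap.restrictScalars ℝ
  have hinv := ρR.hasFDerivAt.comp_hasDerivAt x (hasDerivAt_ringInverse_of_isUnit hW hunit)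
  refine (hinv.hasDerivWithinAt.clm_apply hu).congr_deriv ?_
  change ρ (a * (W x)⁻¹ʳ - (W x)⁻¹ʳ * g) (u x) + ρ (W x)⁻¹ʳ (ρ g (u x)) = _
  simp

theorem conjugation_to_constant_coefficients_general {E : Type*} [NormedAddCommGroup E]
    [NormedSpace ℂ E] (ρ : 𝔸 →ₐ[ℂ] (E →L[ℂ] E)) {G : ℝ → 𝔸} {a : 𝔸}
    (hG : ContinuousOn G (Ici 0)) {c θ : ℝ} (hθ : 0 < θ)
    (hdecay : ∀ x ∈ Ici (0 : ℝ), ‖G x - a‖ ≤ c * Real.exp (-θ * x)) :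
    ∃ θ₁ > (0 : ℝ), ∃ c' > (0 : ℝ), ∃ W : ℝ → 𝔸,
      (∀ x ∈ Ici (0 : ℝ), IsUnit (W x)) ∧
      (∃ K : ℝ, ∀ x ∈ Ici (0 : ℝ), ‖W x‖ ≤ K ∧ ‖(W x)⁻¹ʳ‖ ≤ K) ∧
      (∀ x ∈ Ici (0 : ℝ), ‖W x - 1‖ ≤ c' * Real.exp (-θ₁ * x)) ∧
      (∀ x ∈ Ici (0 : ℝ), HasDerivWithinAt W (G x * W x - W x * a) (Ici 0) x) ∧
      ∀ u : ℝ → E, (∀ x ∈ Ici (0 : ℝ), HasDerivWithinAt u (ρ (G x) (u x)) (Ici 0) x) →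
        ∀ x ∈ Ici (0 : ℝ), HasDerivWithinAt (fun y => ρ (W y)⁻¹ʳ (u y))
          (ρ a (ρ (W x)⁻¹ʳ (u x))) (Ici 0) x := by
  have : CompleteSpace 𝔸 := FiniteDimensional.complete ℂ 𝔸
  have : FiniteDimensional ℝ 𝔸 := FiniteDimensional.complexToReal 𝔸
  obtain ⟨θ₁, hθ₁, c', hc', W, hW⟩ := exists_intertwiner_norm_sub_one_le_exp hG hθ hdecay
  choose hW_decay hW_deriv using hW
  have hlim : Tendsto W atTop (𝓝 1) := tendsto_of_norm_sub_le_exp hθ₁ hW_decay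
  have hcont : ContinuousOn W (Ici 0) := fun x hx =>
    (hW_deriv x hx).continuousAt.continuousWithinAt
  have hunit : ∀ x ∈ Ici (0 : ℝ), IsUnit (W x) := fun x hx =>
    isUnit_of_hasDerivAt_of_tendsto_one hG hW_deriv hlim hx
  obtain ⟨K₁, hK₁⟩ := exists_norm_le_of_tendsto_atTop hcont hlim
  obtain ⟨K₂, hK₂⟩ := exists_norm_ringInverse_le hcont hunit hlim
  exact ⟨θ₁, hθ₁, c', hc', W, hunit, ⟨max K₁ K₂, fun x hx =>
    ⟨(hK₁ x hx).trans (le_max_left _ _), (hK₂ x hx).trans (le_max_right _ _)⟩⟩, hW_decay,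
    fun x hx => (hW_deriv x hx).hasDerivWithinAt, fun u hu x hx =>
      hasDerivWithinAt_ringInverse_apply ρ (hW_deriv x hx) (hunit x hx) (hu x hx)⟩

end BanachAlgebra

/-- The action of square matrices by matrix-vector multiplication, as a representation by continuous
linear maps. -/
def mulVecRepresentation (𝕜 ι : Type*) [NontriviallyNormedField 𝕜] [CompleteSpace 𝕜] [Fintype ι]
    [DecidableEq ι] : Matrix ι ι 𝕜 →ₐ[𝕜] ((ι → 𝕜) →L[𝕜] (ι → 𝕜)) :=
  (toLinAlgEquiv'.trans (Module.End.toContinuousLinearMap (ι → 𝕜))).toAlgHom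

lemma mulVecRepresentation_apply {𝕜 ι : Type*} [NontriviallyNormedField 𝕜] [CompleteSpace 𝕜]
    [Fintype ι] [DecidableEq ι] (A : Matrix ι ι 𝕜) (v : ι → 𝕜) :
    mulVecRepresentation 𝕜 ι A v = A *ᵥ v :=
  rfl

/-- Lemma 2.2. Conjugation of a variable-coefficient linear system with
exponentially convergent coefficients to its constant-coefficient limit. -/
theorem conjugation_to_constant_coefficients {n : ℕ}
    (G : ℝ → Matrix (Fin n) (Fin n) ℂ) (Ginf : Matrix (Fin n) (Fin n) ℂ)
    (hGcont : ∀ i j, ContinuousOn (fun x => G x i j) (Ici 0))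
    (C θ : ℝ) (hC : 0 < C) (hθ : 0 < θ)
    (hdecay : ∀ x ∈ Ici (0 : ℝ),
      ‖Matrix.toEuclideanCLM (𝕜 := ℂ) (G x - Ginf)‖ ≤ C * Real.exp (-θ * x)) :
    ∃ θ₁ > (0 : ℝ), ∃ C' > (0 : ℝ), ∃ W : ℝ → Matrix (Fin n) (Fin n) ℂ,
      (∀ x ∈ Ici (0 : ℝ), IsUnit (W x)) ∧
      (∃ K : ℝ, ∀ x ∈ Ici (0 : ℝ),
        ‖Matrix.toEuclideanCLM (𝕜 := ℂ) (W x)‖ ≤ K ∧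
        ‖Matrix.toEuclideanCLM (𝕜 := ℂ) ((W x)⁻¹)‖ ≤ K) ∧
      (∀ x ∈ Ici (0 : ℝ),
        ‖Matrix.toEuclideanCLM (𝕜 := ℂ) (W x - (1 : Matrix (Fin n) (Fin n) ℂ))‖ ≤ C' * Real.exp (-θ₁ * x)) ∧
      (∀ i j, ∀ x ∈ Ici (0 : ℝ),
        HasDerivWithinAt (fun y => W y i j) ((G x * W x - W x * Ginf) i j) (Ici 0) x) ∧
      ∀ u : ℝ → Fin n → ℂ,
        (∀ x ∈ Ici (0 : ℝ), ∀ i,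
          HasDerivWithinAt (fun y => u y i) ((G x).mulVec (u x) i) (Ici 0) x) →
        ∀ x ∈ Ici (0 : ℝ), ∀ i,
          HasDerivWithinAt (fun y => ((W y)⁻¹).mulVec (u y) i)
            (Ginf.mulVec (((W x)⁻¹).mulVec (u x)) i) (Ici 0) x := by
  -- The hypothesis and the conclusions match because `‖A‖` is by definition `‖toEuclideanCLM A‖`.
  obtain ⟨θ₁, hθ₁, C', hC', W, hunit, hbdd, hW_decay, hW_deriv, hsol⟩ :=
    conjugation_to_constant_coefficients_general (mulVecRepresentation ℂ (Fin n))
      (continuousOn_pi.2 fun i => continuousOn_pi.2 (hGcont i)) hθ hdecay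
  simp only [← nonsing_inv_eq_ringInverse, mulVecRepresentation_apply] at hbdd hsol
  exact ⟨θ₁, hθ₁, C', hC', W, hunit, hbdd, hW_decay,
    fun i j x hx => hasDerivWithinAt_pi.1 (hasDerivWithinAt_pi.1 (hW_deriv x hx) i) j,
    fun u hu x hx => hasDerivWithinAt_pi.1
      (hsol u (fun y hy => hasDerivWithinAt_pi.2 (hu y hy)) x hx)⟩

end
end

section
/- Under Assumptions (H0)–(H3), for every p ∈ 𝒪 and every ζ = (τ, η, γ) ∈ ℝ^{d+1} with ζ ≠ 0 and γ ≥ 0, the matrix 𝒢(p, ζ) has no purely imaginary eigenvalue, and, counted with algebraic multiplicity, it has exactly N eigenvalues with Re μ > 0 and exactly N eigenvalues with Re μ < 0. -/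
open Matrix Complex
open scoped ContDiff

noncomputable section

/-- Real matrix mapped to a complex matrix. -/
def cmap {N : ℕ} (A : Matrix (Fin N) (Fin N) ℝ) : Matrix (Fin N) (Fin N) ℂ :=
  A.map (fun x => (x : ℂ))

/-- Frequency variable `ζ = (τ, η, γ) ∈ ℝ × ℝ^{d-1} × ℝ` (here `d = m + 1`). -/
abbrev Freq (m : ℕ) := ℝ × (Fin m → ℝ) × ℝ

/-- The block `𝒜(p, ζ)`. -/
def calA {N m : ℕ} (A : Fin (m + 1) → Matrix (Fin N) (Fin N) ℝ)
    (B : Fin (m + 1) → Fin (m + 1) → Matrix (Fin N) (Fin N) ℝ) (ζ : Freq m) :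
    Matrix (Fin N) (Fin N) ℂ :=
  (cmap (B (Fin.last m) (Fin.last m)))⁻¹ *
    (cmap (A (Fin.last m)) -
      ∑ j : Fin m, (Complex.I * (ζ.2.1 j : ℂ)) •
        (cmap (B j.castSucc (Fin.last m)) + cmap (B (Fin.last m) j.castSucc)))

/-- The block `ℳ(p, ζ)`. -/
def calM {N m : ℕ} (A : Fin (m + 1) → Matrix (Fin N) (Fin N) ℝ)
    (B : Fin (m + 1) → Fin (m + 1) → Matrix (Fin N) (Fin N) ℝ) (ζ : Freq m) :
    Matrix (Fin N) (Fin N) ℂ :=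
  (cmap (B (Fin.last m) (Fin.last m)))⁻¹ *
    ((Complex.I * (ζ.1 : ℂ) + (ζ.2.2 : ℂ)) • (1 : Matrix (Fin N) (Fin N) ℂ) +
      ∑ j : Fin m, (Complex.I * (ζ.2.1 j : ℂ)) • cmap (A j.castSucc) +
      ∑ j : Fin m, ∑ k : Fin m, ((ζ.2.1 j * ζ.2.1 k : ℝ) : ℂ) • cmap (B j.castSucc k.castSucc))

/-- The full `2N × 2N` matrix `𝒢(p, ζ) = [[0, Id], [ℳ, 𝒜]]`. -/
def calG {N m : ℕ} (A : Fin (m + 1) → Matrix (Fin N) (Fin N) ℝ)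
    (B : Fin (m + 1) → Fin (m + 1) → Matrix (Fin N) (Fin N) ℝ) (ζ : Freq m) :
    Matrix (Fin N ⊕ Fin N) (Fin N ⊕ Fin N) ℂ :=
  Matrix.fromBlocks 0 1 (calM A B ζ) (calA A B ζ)

/-- The generalized eigenspace of `f` for eigenvalues of negative real part. -/
def stableSubspace {E : Type*} [AddCommGroup E] [Module ℂ E] (f : Module.End ℂ E) :
    Submodule ℂ E :=
  ⨆ μ ∈ {μ : ℂ | μ.re < 0}, f.maxGenEigenspace μ

/-- The generalized eigenspace of `f` for eigenvalues of positive real part. -/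
def unstableSubspace {E : Type*} [AddCommGroup E] [Module ℂ E] (f : Module.End ℂ E) :
    Submodule ℂ E :=
  ⨆ μ ∈ {μ : ℂ | 0 < μ.re}, f.maxGenEigenspace μ

/-- (H0): the coefficients are `C^∞` functions on `𝒪`. -/
def HypH0 {M N m : ℕ} (𝒪 : Set (Fin M → ℝ))
    (A : Fin (m + 1) → (Fin M → ℝ) → Matrix (Fin N) (Fin N) ℝ)
    (B : Fin (m + 1) → Fin (m + 1) → (Fin M → ℝ) → Matrix (Fin N) (Fin N) ℝ) : Prop :=
  (∀ j i k, ContDiffOn ℝ ∞ (fun p => A j p i k) 𝒪) ∧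
    (∀ j l i k, ContDiffOn ℝ ∞ (fun p => B j l p i k) 𝒪)

/-- (H1): for `p ∈ 𝒪` and `ξ ≠ 0`, the eigenvalues of `Σ ξ_j A_j(p)` are real and
semisimple, with multiplicities independent of `(p, ξ)`. -/
def HypH1 {M N m : ℕ} (𝒪 : Set (Fin M → ℝ))
    (A : Fin (m + 1) → (Fin M → ℝ) → Matrix (Fin N) (Fin N) ℝ) : Prop :=
  ∃ mult : Multiset ℕ, ∀ p ∈ 𝒪, ∀ ξ : Fin (m + 1) → ℝ, ξ ≠ 0 →
    (∀ μ ∈ spectrum ℂ (cmap (∑ j, ξ j • A j p)), μ.im = 0) ∧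
    (∀ μ : ℂ, Module.End.eigenspace (Matrix.toLin' (cmap (∑ j, ξ j • A j p))) μ =
      Module.End.maxGenEigenspace (Matrix.toLin' (cmap (∑ j, ξ j • A j p))) μ) ∧
    (((cmap (∑ j, ξ j • A j p)).charpoly.roots.dedup.map
        fun μ => (cmap (∑ j, ξ j • A j p)).charpoly.roots.count μ) = mult)

/-- (H2): uniform parabolicity. -/
def HypH2 {M N m : ℕ} (𝒪 : Set (Fin M → ℝ))
    (A : Fin (m + 1) → (Fin M → ℝ) → Matrix (Fin N) (Fin N) ℝ)
    (B : Fin (m + 1) → Fin (m + 1) → (Fin M → ℝ) → Matrix (Fin N) (Fin N) ℝ) : Prop :=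
  ∃ c > (0 : ℝ), ∀ p ∈ 𝒪, ∀ ξ : Fin (m + 1) → ℝ,
    ∀ μ ∈ spectrum ℂ
      ((∑ j, (Complex.I * (ξ j : ℂ)) • cmap (A j p)) +
        ∑ j, ∑ k, ((ξ j * ξ k : ℝ) : ℂ) • cmap (B j k p)),
      c * ∑ j, (ξ j) ^ 2 ≤ μ.re

/-- (H3): noncharacteristic boundary. -/
def HypH3 {M N m : ℕ} (𝒪 : Set (Fin M → ℝ))
    (A : Fin (m + 1) → (Fin M → ℝ) → Matrix (Fin N) (Fin N) ℝ) : Prop :=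
  ∀ p ∈ 𝒪, (A (Fin.last m) p).det ≠ 0

end

/-!
Eliminating the first block of `𝒢(p, ζ)` shows that `iy` is an eigenvalue of `𝒢(p, ζ)` exactly when
`-(iτ + γ)` is an eigenvalue of the symbol `i ∑ ξ_j A_j + ∑ ξ_j ξ_k B_{j,k}` at `ξ = (η, y)`, which
parabolicity forbids unless `ζ = 0`. Replacing `A` by `s A` and `ξ` by `s ξ` multiplies the symbol
by `s²`, so `(s A, B)` is parabolic with the same constant, also for `s = 0` by passing to the
limit. Hence no eigenvalue crosses the imaginary axis as `(A, ζ)` is deformed to `(0, (0, 0, 1))`,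
and the number of eigenvalues with positive real part is constant. At the end point
`𝒢 = [[0, Id], [B_{d,d}⁻¹, 0]]` has a spectrum symmetric under `μ ↦ -μ`, so it splits evenly.
-/

section EigenvalueCount

open Polynomial Filter
open scoped Topology

variable {n : Type*} [Fintype n] [DecidableEq n] {S T : Set ℂ}

open Classical in
/-- The number of eigenvalues of `M` lying in `S`, counted with algebraic multiplicity. -/
noncomputable def eigenvalueCount (S : Set ℂ) (M : Matrix n n ℂ) : ℕ :=
  M.charpoly.roots.countP (· ∈ S)

/-- `x` lists the eigenvalues of `M`, repeated according to algebraic multiplicity and in an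
arbitrary order. The size of `M` itself indexes the list, so that lists for different matrices live
in the same finite-dimensional space and can be compared. -/
def IsEigenvalueList (M : Matrix n n ℂ) (x : n → ℂ) : Prop :=
  M.charpoly = ∏ i, (X - C (x i))

theorem mem_roots_charpoly_iff_mem_spectrum {M : Matrix n n ℂ} {μ : ℂ} :
    μ ∈ M.charpoly.roots ↔ μ ∈ spectrum ℂ M := by
  rw [mem_roots M.charpoly_monic.ne_zero, mem_spectrum_iff_isRoot_charpoly]

theorem card_roots_charpoly (M : Matrix n n ℂ) : M.charpoly.roots.card = Fintype.card n := by
  rw [IsAlgClosed.card_roots_eq_natDegree, charpoly_natDegree_eq_dim]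

theorem card_filter_roots_charpoly (M : Matrix n n ℂ) (p : ℂ → Prop) [DecidablePred p] :
    (M.charpoly.roots.filter p).card = eigenvalueCount {μ | p μ} M := by
  rw [eigenvalueCount, ← Multiset.countP_eq_card_filter]
  congr!

theorem exists_isEigenvalueList (M : Matrix n n ℂ) : ∃ x, IsEigenvalueList M x := by
  have hcard : Fintype.card n = Fintype.card M.charpoly.roots := by
    rw [Multiset.card_coe, card_roots_charpoly]
  let e : n ≃ M.charpoly.roots := Fintype.equivOfCardEq hcard
  refine ⟨fun i => (e i).1, ?_⟩
  calc M.charpoly = (M.charpoly.roots.map fun μ => X - C μ).prod :=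
        (IsAlgClosed.splits _).eq_prod_roots_of_monic M.charpoly_monic
    _ = ∏ μ : M.charpoly.roots, (X - C μ.1) := by
        conv_lhs => rw [← Multiset.map_univ_coe M.charpoly.roots, Multiset.map_map]
        rfl
    _ = ∏ i, (X - C (e i).1) := (e.prod_comp fun μ => X - C μ.1).symm

theorem IsEigenvalueList.roots_charpoly {M : Matrix n n ℂ} {x : n → ℂ}
    (hx : IsEigenvalueList M x) : M.charpoly.roots = Finset.univ.val.map x := by
  rw [hx, ← roots_multiset_prod_X_sub_C (Finset.univ.val.map x), Multiset.map_map]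
  rfl

theorem IsEigenvalueList.mem_spectrum {M : Matrix n n ℂ} {x : n → ℂ} (hx : IsEigenvalueList M x)
    (i : n) : x i ∈ spectrum ℂ M := by
  rw [← mem_roots_charpoly_iff_mem_spectrum, hx.roots_charpoly]
  exact Multiset.mem_map_of_mem x (Finset.mem_univ i)

theorem IsEigenvalueList.eigenvalueCount_eq {M : Matrix n n ℂ} {x : n → ℂ}
    (hx : IsEigenvalueList M x) (S : Set ℂ) :
    eigenvalueCount S M = ∑ i, S.indicator (fun _ => 1) (x i) := by
  classical
  simp only [eigenvalueCount, hx.roots_charpoly, Multiset.countP_map, Set.indicator_apply,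
    Finset.sum_boole, Nat.cast_id]
  rfl

theorem IsEigenvalueList.of_tendsto {ι : Type*} {l : Filter ι} [NeBot l] {M : ι → Matrix n n ℂ}
    {M₀ : Matrix n n ℂ} {x : ι → n → ℂ} {x₀ : n → ℂ} (hx : ∀ j, IsEigenvalueList (M j) (x j))
    (hM : Tendsto M l (𝓝 M₀)) (hx₀ : Tendsto x l (𝓝 x₀)) : IsEigenvalueList M₀ x₀ := by
  refine Polynomial.funext fun z => tendsto_nhds_unique
    (f := fun j => (M j).charpoly.eval z) (l := l) ?_ ?_
  · have hcont : Continuous fun G : Matrix n n ℂ => G.charpoly.eval z := by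
      simp only [eval_charpoly]
      fun_prop
    exact (hcont.tendsto M₀).comp hM
  · have hcont : Continuous fun y : n → ℂ => (∏ i, (X - C (y i))).eval z := by
      simp only [eval_prod, eval_sub, eval_X, eval_C]
      fun_prop
    exact ((hcont.tendsto x₀).comp hx₀).congr fun j => by rw [hx j, Function.comp_apply]

section

attribute [local instance] Matrix.linftyOpNormedRing Matrix.linftyOpNormedAlgebra

theorem IsEigenvalueList.exists_tendsto_subseq {M : ℕ → Matrix n n ℂ} {M₀ : Matrix n n ℂ}
    {x : ℕ → n → ℂ} (hx : ∀ j, IsEigenvalueList (M j) (x j)) (hM : Tendsto M atTop (𝓝 M₀)) :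
    ∃ x₀, IsEigenvalueList M₀ x₀ ∧ ∃ φ : ℕ → ℕ, StrictMono φ ∧ Tendsto (x ∘ φ) atTop (𝓝 x₀) := by
  obtain ⟨R, hR⟩ := (hM.norm.mul_const ‖(1 : Matrix n n ℂ)‖).bddAbove_range
  have hbound (j : ℕ) : x j ∈ Set.univ.pi fun _ : n => Metric.closedBall (0 : ℂ) R := fun i _ =>
    mem_closedBall_zero_iff.mpr <|
      (spectrum.norm_le_norm_mul_of_mem ((hx j).mem_spectrum i)).trans (hR ⟨j, rfl⟩)
  obtain ⟨x₀, -, φ, hφ, hx₀⟩ := tendsto_subseq_of_bounded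
    (Bornology.IsBounded.pi fun _ => Metric.isBounded_closedBall) hbound
  exact ⟨x₀, .of_tendsto (fun j => hx (φ j)) (hM.comp hφ.tendsto_atTop) hx₀, φ, hφ, hx₀⟩

end

theorem upperSemicontinuous_eigenvalueCount (hS : IsClosed S) :
    UpperSemicontinuous (eigenvalueCount S : Matrix n n ℂ → ℕ) := by
  have : SequentialSpace (Matrix n n ℂ) := inferInstanceAs (SequentialSpace (n → n → ℂ))
  rw [upperSemicontinuous_iff_isClosed_preimage]
  refine fun k => IsSeqClosed.isClosed fun M M₀ hk hM => ?_
  have hsum : UpperSemicontinuous fun y : n → ℂ => ∑ i, S.indicator (fun _ => 1) (y i) :=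
    upperSemicontinuous_sum fun i _ =>
      (hS.upperSemicontinuous_indicator zero_le_one).comp (continuous_apply i)
  choose x hx using fun j => exists_isEigenvalueList (M j)
  obtain ⟨x₀, hx₀, φ, -, hlim⟩ := IsEigenvalueList.exists_tendsto_subseq hx hM
  rw [Set.mem_preimage, hx₀.eigenvalueCount_eq]
  refine (hsum.isClosed_preimage k).mem_of_tendsto hlim (Eventually.of_forall fun j => ?_)
  rw [Function.comp_apply, Set.mem_preimage, ← (hx _).eigenvalueCount_eq]
  exact hk _

theorem eigenvalueCount_add_eigenvalueCount_compl (S : Set ℂ) (M : Matrix n n ℂ) :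
    eigenvalueCount S M + eigenvalueCount Sᶜ M = Fintype.card n := by
  classical
  rw [← card_roots_charpoly M, Multiset.card_eq_countP_add_countP (· ∈ S), eigenvalueCount,
    eigenvalueCount]
  congr!

theorem eigenvalueCount_le_card (S : Set ℂ) (M : Matrix n n ℂ) :
    eigenvalueCount S M ≤ Fintype.card n :=
  (Nat.le_add_right _ _).trans_eq (eigenvalueCount_add_eigenvalueCount_compl S M)

theorem eigenvalueCount_congr {M : Matrix n n ℂ} (h : ∀ μ ∈ spectrum ℂ M, μ ∈ S ↔ μ ∈ T) :
    eigenvalueCount S M = eigenvalueCount T M := by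
  classical
  exact Multiset.countP_congr rfl fun μ hμ =>
    propext (h μ (mem_roots_charpoly_iff_mem_spectrum.mp hμ))

theorem eigenvalueCount_re_pos_add_re_neg {M : Matrix n n ℂ} (h : ∀ μ ∈ spectrum ℂ M, μ.re ≠ 0) :
    eigenvalueCount {μ | 0 < μ.re} M + eigenvalueCount {μ | μ.re < 0} M = Fintype.card n := by
  rw [← eigenvalueCount_add_eigenvalueCount_compl {μ | 0 < μ.re} M]
  congr 1
  refine eigenvalueCount_congr fun μ hμ => ?_
  simp only [Set.mem_ofPred_eq, Set.mem_compl_iff, not_lt]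
  exact ⟨le_of_lt, fun hle => hle.lt_of_ne (h μ hμ)⟩

theorem eigenvalueCount_eq_card_iff {M : Matrix n n ℂ} :
    eigenvalueCount S M = Fintype.card n ↔ spectrum ℂ M ⊆ S := by
  classical
  rw [← card_roots_charpoly M, eigenvalueCount, Multiset.countP_eq_card]
  simp only [mem_roots_charpoly_iff_mem_spectrum, Set.subset_def]

theorem isClosed_setOf_spectrum_subset (hS : IsClosed S) :
    IsClosed {M : Matrix n n ℂ | spectrum ℂ M ⊆ S} := by
  have heq : {M : Matrix n n ℂ | spectrum ℂ M ⊆ S} =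
      eigenvalueCount S ⁻¹' Set.Ici (Fintype.card n) := by
    ext M
    rw [Set.mem_ofPred_eq, ← eigenvalueCount_eq_card_iff, Set.mem_preimage, Set.mem_Ici,
      (eigenvalueCount_le_card S M).ge_iff_eq', eq_comm]
  rw [heq]
  exact (upperSemicontinuous_eigenvalueCount hS).isClosed_preimage _

theorem eigenvalueCount_closure {M : Matrix n n ℂ} (h : Disjoint (spectrum ℂ M) (frontier S)) :
    eigenvalueCount (closure S) M = eigenvalueCount S M := by
  refine eigenvalueCount_congr fun μ hμ => ⟨fun hcl => ?_, fun hS => subset_closure hS⟩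
  exact interior_subset (not_not.mp fun hint => h.notMem_of_mem_left hμ ⟨hcl, hint⟩)

-- Off the frontier, `eigenvalueCount S` and `Fintype.card n - eigenvalueCount S` both count the
-- eigenvalues in a closed set, so both are upper semicontinuous.
theorem continuousOn_eigenvalueCount (S : Set ℂ) :
    ContinuousOn (eigenvalueCount S) {M : Matrix n n ℂ | Disjoint (spectrum ℂ M) (frontier S)} := by
  rw [continuousOn_iff_continuous_domRestrict, continuous_iff_lower_upperSemicontinuous]
  constructor
  · have heq : Set.domRestrict {M : Matrix n n ℂ | Disjoint (spectrum ℂ M) (frontier S)}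
        (eigenvalueCount S) =
          (Fintype.card n - ·) ∘ eigenvalueCount (closure Sᶜ) ∘ Subtype.val := by
      ext ⟨M, hM⟩
      have hcompl := eigenvalueCount_add_eigenvalueCount_compl S M
      rw [← eigenvalueCount_closure (S := Sᶜ) (frontier_compl S ▸ hM)] at hcompl
      exact Nat.eq_sub_of_add_eq hcompl
    rw [heq]
    exact continuous_of_discreteTopology.comp_upperSemicontinuous_antitone
      ((upperSemicontinuous_eigenvalueCount isClosed_closure).comp continuous_subtype_val)
      fun _ _ h => Nat.sub_le_sub_left h _
  · have heq : Set.domRestrict {M : Matrix n n ℂ | Disjoint (spectrum ℂ M) (frontier S)}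
        (eigenvalueCount S) = eigenvalueCount (closure S) ∘ Subtype.val :=
      funext fun M => (eigenvalueCount_closure M.2).symm
    rw [heq]
    exact (upperSemicontinuous_eigenvalueCount isClosed_closure).comp continuous_subtype_val

theorem eigenvalueCount_eq_of_isPreconnected {Y : Type*} [TopologicalSpace Y] {s : Set Y}
    (hs : IsPreconnected s) {G : Y → Matrix n n ℂ} (hG : ContinuousOn G s)
    (hS : ∀ t ∈ s, Disjoint (spectrum ℂ (G t)) (frontier S)) {t u : Y} (ht : t ∈ s) (hu : u ∈ s) :
    eigenvalueCount S (G t) = eigenvalueCount S (G u) :=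
  hs.constant ((continuousOn_eigenvalueCount S).comp hG hS) ht hu

end EigenvalueCount

section SecondOrderCompanion

open Polynomial
open scoped Pointwise

variable {n : Type*} [Fintype n] [DecidableEq n]

theorem eval_charpoly_fromBlocks_zero_one {R : Type*} [CommRing R] (K L : Matrix n n R) (z : R) :
    (fromBlocks 0 1 K L).charpoly.eval z = (z ^ 2 • (1 : Matrix n n R) - z • L - K).det := by
  have hfactor : (fromBlocks 0 1 (-1) 1 * fromBlocks 1 ((1 - z) • 1) 0 1 :
      Matrix (n ⊕ n) (n ⊕ n) R) = fromBlocks 0 1 (-1) (z • 1) := by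
    simp [fromBlocks_multiply, sub_smul]
  have hdet : (fromBlocks 0 1 (-1) (z • 1) : Matrix (n ⊕ n) (n ⊕ n) R).det = 1 := by
    simp [← hfactor, det_mul, det_fromBlocks_one₂₂]
  have hscalar : scalar (n ⊕ n) z - fromBlocks 0 1 K L =
      fromBlocks (z • 1) (-1) (-K) (z • 1 - L) := by
    rw [scalar_apply, ← smul_one_eq_diagonal, ← fromBlocks_one, fromBlocks_smul, sub_eq_add_neg,
      fromBlocks_neg, fromBlocks_add]
    simp [sub_eq_add_neg]
  have htriangular : (fromBlocks (z • 1) (-1) (-K) (z • 1 - L) * fromBlocks 0 1 (-1) (z • 1) :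
      Matrix (n ⊕ n) (n ⊕ n) R) = fromBlocks 1 0 (L - z • 1) (z ^ 2 • 1 - z • L - K) := by
    rw [fromBlocks_multiply, fromBlocks_inj]
    refine ⟨by simp, by simp, by simp, ?_⟩
    simp only [mul_one, mul_smul_comm, smul_sub, smul_smul, sq]
    abel
  rw [eval_charpoly, hscalar, ← mul_one (det _), ← hdet, ← det_mul, htriangular,
    det_fromBlocks_zero₁₂, det_one, one_mul]

theorem charpoly_fromBlocks_zero_one_zero_comp_neg_X {R : Type*} [CommRing R] [IsDomain R]
    [Infinite R] (K : Matrix n n R) :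
    (fromBlocks 0 1 K 0).charpoly.comp (-X) = (fromBlocks 0 1 K 0).charpoly :=
  Polynomial.funext fun z => by simp [eval_comp, eval_charpoly_fromBlocks_zero_one]

theorem eigenvalueCount_neg_fromBlocks_zero_one_zero (S : Set ℂ) (K : Matrix n n ℂ) :
    eigenvalueCount (-S) (fromBlocks 0 1 K 0) = eigenvalueCount S (fromBlocks 0 1 K 0) := by
  classical
  simp only [eigenvalueCount]
  conv_rhs => rw [← charpoly_fromBlocks_zero_one_zero_comp_neg_X, roots_comp_neg_X]
  rw [Multiset.countP_map, Multiset.countP_eq_card_filter]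
  simp only [Set.mem_neg]

end SecondOrderCompanion

section Symbol

variable {N : ℕ} {ι : Type*} [Fintype ι] {A : ι → Matrix (Fin N) (Fin N) ℝ}
  {B : ι → ι → Matrix (Fin N) (Fin N) ℝ} {c : ℝ}

/-- The symbol `i ∑ ξ_j A_j + ∑ ξ_j ξ_k B_{j,k}` of the operator with convection matrices `A` and
viscosity matrices `B`. -/
def symbol (A : ι → Matrix (Fin N) (Fin N) ℝ) (B : ι → ι → Matrix (Fin N) (Fin N) ℝ) (ξ : ι → ℝ) :
    Matrix (Fin N) (Fin N) ℂ :=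
  (∑ j, (Complex.I * (ξ j : ℂ)) • cmap (A j)) + ∑ j, ∑ k, ((ξ j * ξ k : ℝ) : ℂ) • cmap (B j k)

/-- Strict parabolicity with constant `c`: assumption (H2) for a single point `p`. -/
def IsParabolicWith (c : ℝ) (A : ι → Matrix (Fin N) (Fin N) ℝ)
    (B : ι → ι → Matrix (Fin N) (Fin N) ℝ) : Prop :=
  ∀ ξ, ∀ μ ∈ spectrum ℂ (symbol A B ξ), c * ∑ j, ξ j ^ 2 ≤ μ.re

theorem cmap_smul (s : ℝ) (M : Matrix (Fin N) (Fin N) ℝ) : cmap (s • M) = (s : ℂ) • cmap M := by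
  ext i j
  simp [cmap]

theorem symbol_smul_smul (A : ι → Matrix (Fin N) (Fin N) ℝ)
    (B : ι → ι → Matrix (Fin N) (Fin N) ℝ) (s : ℝ) (ξ : ι → ℝ) :
    symbol (s • A) B (s • ξ) = (s : ℂ) ^ 2 • symbol A B ξ := by
  simp only [symbol, Pi.smul_apply, cmap_smul, smul_eq_mul, smul_add, Finset.smul_sum, smul_smul]
  congr 1
  · refine Finset.sum_congr rfl fun j _ => ?_
    congr 1
    push_cast
    ring
  · refine Finset.sum_congr rfl fun j _ => Finset.sum_congr rfl fun k _ => ?_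
    congr 1
    push_cast
    ring

theorem symbol_zero_right (A : ι → Matrix (Fin N) (Fin N) ℝ)
    (B : ι → ι → Matrix (Fin N) (Fin N) ℝ) : symbol A B 0 = 0 := by
  simp [symbol]

theorem symbol_zero_left_single [DecidableEq ι] (B : ι → ι → Matrix (Fin N) (Fin N) ℝ) (j : ι) :
    symbol 0 B (Pi.single j 1) = cmap (B j j) := by
  simp [symbol, Pi.single_apply, cmap]

theorem IsParabolicWith.smul_of_ne_zero (h : IsParabolicWith c A B) {s : ℝ} (hs : s ≠ 0) :
    IsParabolicWith c (s • A) B := by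
  intro ξ μ hμ
  have hs2 : (s : ℂ) ^ 2 ≠ 0 := pow_ne_zero 2 (ofReal_ne_zero.mpr hs)
  rw [← smul_inv_smul₀ hs ξ, symbol_smul_smul, ← Units.smul_mk0 hs2,
    spectrum.unit_smul_eq_smul] at hμ
  obtain ⟨ν, hν, rfl⟩ := hμ
  calc c * ∑ j, ξ j ^ 2 = s ^ 2 * (c * ∑ j, (s⁻¹ • ξ) j ^ 2) := by
        simp only [Pi.smul_apply, smul_eq_mul, mul_pow, ← Finset.mul_sum]
        field_simp
    _ ≤ s ^ 2 * ν.re := by gcongr; exact h _ ν hν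
    _ = _ := by rw [← re_ofReal_mul, ofReal_pow]; rfl

theorem continuous_symbol_smul (A : ι → Matrix (Fin N) (Fin N) ℝ)
    (B : ι → ι → Matrix (Fin N) (Fin N) ℝ) (ξ : ι → ℝ) :
    Continuous fun s : ℝ => symbol (s • A) B ξ := by
  simp only [symbol, Pi.smul_apply, cmap_smul]
  fun_prop

theorem IsParabolicWith.smul (h : IsParabolicWith c A B) (s : ℝ) :
    IsParabolicWith c (s • A) B := by
  intro ξ
  have hclosed : IsClosed {s : ℝ | spectrum ℂ (symbol (s • A) B ξ) ⊆
      {μ | c * ∑ j, ξ j ^ 2 ≤ μ.re}} :=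
    (isClosed_setOf_spectrum_subset (isClosed_le continuous_const continuous_re)).preimage
      (continuous_symbol_smul A B ξ)
  exact hclosed.closure_subset_iff.mpr (fun t ht => h.smul_of_ne_zero ht ξ)
    (dense_compl_singleton (0 : ℝ) s)

theorem IsParabolicWith.isUnit_cmap_diag (h : IsParabolicWith c A B) (hc : 0 < c) (j : ι) :
    IsUnit (cmap (B j j)) := by
  classical
  by_contra hsingular
  rw [← spectrum.zero_mem_iff ℂ, ← symbol_zero_left_single, ← zero_smul ℝ A] at hsingular
  have hle := h.smul 0 _ 0 hsingular
  simp only [Pi.single_apply, ite_pow, one_pow, ne_eq, OfNat.ofNat_ne_zero, not_false_eq_true,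
    zero_pow, Finset.sum_ite_eq', Finset.mem_univ, if_true, mul_one, zero_re] at hle
  exact hle.not_gt hc

theorem IsParabolicWith.eq_zero_of_mem_spectrum_symbol (h : IsParabolicWith c A B) (hc : 0 < c)
    {ξ : ι → ℝ} {μ : ℂ} (hμ : μ ∈ spectrum ℂ (symbol A B ξ)) (hre : μ.re ≤ 0) :
    ξ = 0 ∧ μ = 0 := by
  have hsum : ∑ j, ξ j ^ 2 ≤ 0 := nonpos_of_mul_nonpos_right ((h ξ μ hμ).trans hre) hc
  have hξ : ξ = 0 := by
    have hsq := (Finset.sum_eq_zero_iff_of_nonneg fun j _ => sq_nonneg (ξ j)).mp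
      (hsum.antisymm (Finset.sum_nonneg fun j _ => sq_nonneg (ξ j)))
    exact funext fun j => pow_eq_zero_iff two_ne_zero |>.mp (hsq j (Finset.mem_univ j))
  refine ⟨hξ, not_not.mp fun hne => ?_⟩
  rw [hξ, symbol_zero_right, spectrum.mem_iff, sub_zero] at hμ
  exact hμ ((IsUnit.mk0 μ hne).map _)

end Symbol

section BoundarySymbol

variable {N m : ℕ} {A : Fin (m + 1) → Matrix (Fin N) (Fin N) ℝ}
  {B : Fin (m + 1) → Fin (m + 1) → Matrix (Fin N) (Fin N) ℝ} {c : ℝ}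

-- Substituting `∂_d = μ = iy` in the second-order system encoded by `calG` gives back the symbol.
theorem cmap_mul_sub_calA_sub_calM (hB : IsUnit (cmap (B (Fin.last m) (Fin.last m))))
    (ζ : Freq m) (y : ℝ) :
    cmap (B (Fin.last m) (Fin.last m)) *
      ((Complex.I * y) ^ 2 • 1 - (Complex.I * y) • calA A B ζ - calM A B ζ) =
      scalar (Fin N) (-(Complex.I * ζ.1 + ζ.2.2)) - symbol A B (Fin.snoc ζ.2.1 y) := by
  have hinv := mul_nonsing_inv _ ((isUnit_iff_isUnit_det _).mp hB)
  have hI (a b : ℂ) : Complex.I * a * (Complex.I * b) = -(a * b) := by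
    linear_combination a * b * Complex.I_mul_I
  rw [mul_sub, mul_sub, mul_smul_comm, mul_smul_comm, mul_one, calA, calM, ← mul_assoc,
    ← mul_assoc, hinv, one_mul, one_mul, sq, hI]
  simp only [symbol, Fin.sum_univ_castSucc, Fin.snoc_castSucc, Fin.snoc_last,
    Finset.sum_add_distrib, scalar_apply, ← smul_one_eq_diagonal, smul_sub, Finset.smul_sum,
    smul_add, smul_smul, hI, neg_smul, Finset.sum_neg_distrib, ofReal_mul, mul_comm (y : ℂ)]
  abel

theorem I_mul_mem_spectrum_calG_iff (hB : IsUnit (cmap (B (Fin.last m) (Fin.last m))))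
    (ζ : Freq m) (y : ℝ) :
    Complex.I * y ∈ spectrum ℂ (calG A B ζ) ↔
      -(Complex.I * ζ.1 + ζ.2.2) ∈ spectrum ℂ (symbol A B (Fin.snoc ζ.2.1 y)) := by
  have hdet : (cmap (B (Fin.last m) (Fin.last m))).det ≠ 0 :=
    ((isUnit_iff_isUnit_det _).mp hB).ne_zero
  rw [mem_spectrum_iff_isRoot_charpoly, mem_spectrum_iff_isRoot_charpoly, Polynomial.IsRoot,
    Polynomial.IsRoot, calG, eval_charpoly_fromBlocks_zero_one, eval_charpoly,
    ← cmap_mul_sub_calA_sub_calM hB, det_mul, mul_eq_zero, or_iff_right hdet]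

/-- The nonzero frequencies of the closed half-space `γ ≥ 0`. -/
def admissibleFreq (m : ℕ) : Set (Freq m) :=
  {ζ | ζ ≠ 0 ∧ 0 ≤ ζ.2.2}

theorem starConvex_admissibleFreq (m : ℕ) : StarConvex ℝ (0, 0, 1) (admissibleFreq m) := by
  rintro ⟨τ, η, γ⟩ ⟨hne, hγ⟩ a b ha hb hab
  rcases ha.eq_or_lt with rfl | hapos
  · obtain rfl : b = 1 := by simpa using hab
    simpa using ⟨hne, hγ⟩
  · have hpos : 0 < a + b * γ := add_pos_of_pos_of_nonneg hapos (mul_nonneg hb hγ)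
    refine ⟨fun hzero => hpos.ne' ?_, ?_⟩
    · simpa using congrArg (fun z : Freq m => z.2.2) hzero
    · simpa using hpos.le

theorem zero_zero_one_mem_admissibleFreq (m : ℕ) : ((0, 0, 1) : Freq m) ∈ admissibleFreq m :=
  ⟨by simp, zero_le_one⟩

theorem IsParabolicWith.re_ne_zero_of_mem_spectrum_calG (h : IsParabolicWith c A B) (hc : 0 < c)
    {ζ : Freq m} (hζ : ζ ∈ admissibleFreq m) {μ : ℂ} (hμ : μ ∈ spectrum ℂ (calG A B ζ)) :
    μ.re ≠ 0 := by
  intro hre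
  have hμ_eq : μ = Complex.I * μ.im := Complex.ext (by simp [hre]) (by simp)
  rw [hμ_eq, I_mul_mem_spectrum_calG_iff (h.isUnit_cmap_diag hc _)] at hμ
  obtain ⟨hξ, hτγ⟩ := h.eq_zero_of_mem_spectrum_symbol hc hμ (by simpa using hζ.2)
  have hη : ζ.2.1 = 0 := funext fun j => by simpa using congrFun hξ j.castSucc
  have hτ : ζ.1 = 0 := by simpa using congrArg Complex.im hτγ
  have hγ : ζ.2.2 = 0 := by simpa using congrArg Complex.re hτγ
  exact hζ.1 (Prod.ext hτ (Prod.ext hη hγ))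

theorem continuous_calG_smul (A : Fin (m + 1) → Matrix (Fin N) (Fin N) ℝ)
    (B : Fin (m + 1) → Fin (m + 1) → Matrix (Fin N) (Fin N) ℝ) :
    Continuous fun q : ℝ × Freq m => calG (q.1 • A) B q.2 := by
  simp only [calG, calM, calA, Pi.smul_apply, cmap_smul]
  refine Continuous.matrix_fromBlocks continuous_const continuous_const ?_ ?_ <;> fun_prop

theorem calA_zero_left_zero_snd (B : Fin (m + 1) → Fin (m + 1) → Matrix (Fin N) (Fin N) ℝ)
    (τ γ : ℝ) : calA 0 B (τ, 0, γ) = 0 := by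
  simp [calA, cmap]

theorem IsParabolicWith.eigenvalueCount_calG_eq (h : IsParabolicWith c A B) (hc : 0 < c)
    {ζ : Freq m} (hζ : ζ ∈ admissibleFreq m) :
    eigenvalueCount {μ | 0 < μ.re} (calG A B ζ) =
      eigenvalueCount {μ | 0 < μ.re} (calG 0 B (0, 0, 1)) := by
  have hbase := zero_zero_one_mem_admissibleFreq m
  have hconn : IsPreconnected ((Set.univ : Set ℝ) ×ˢ admissibleFreq m) :=
    isPreconnected_univ.prod
      ((starConvex_admissibleFreq m).isPathConnected hbase).isConnected.isPreconnected
  have hdisjoint : ∀ q ∈ (Set.univ : Set ℝ) ×ˢ admissibleFreq m,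
      Disjoint (spectrum ℂ (calG (q.1 • A) B q.2)) (frontier {μ | 0 < μ.re}) := fun q hq => by
    rw [frontier_setOfPred_lt_re, Set.disjoint_left]
    exact fun μ hμ => (h.smul q.1).re_ne_zero_of_mem_spectrum_calG hc hq.2 hμ
  simpa using eigenvalueCount_eq_of_isPreconnected hconn
    (continuous_calG_smul A B).continuousOn hdisjoint
    (t := (1, ζ)) (u := (0, (0, 0, 1))) ⟨trivial, hζ⟩ ⟨trivial, hbase⟩

theorem eigenvalueCount_re_pos_calG_zero_eq_re_neg
    (B : Fin (m + 1) → Fin (m + 1) → Matrix (Fin N) (Fin N) ℝ) (τ γ : ℝ) :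
    eigenvalueCount {μ | 0 < μ.re} (calG 0 B (τ, 0, γ)) =
      eigenvalueCount {μ | μ.re < 0} (calG 0 B (τ, 0, γ)) := by
  rw [calG, calA_zero_left_zero_snd, ← eigenvalueCount_neg_fromBlocks_zero_one_zero]
  congr 1
  ext μ
  simp

theorem calG_hyperbolic_splitting_general (h : IsParabolicWith c A B) (hc : 0 < c) {ζ : Freq m}
    (hζ : ζ ≠ 0) (hγ : 0 ≤ ζ.2.2) :
    (∀ μ ∈ spectrum ℂ (calG A B ζ), μ.re ≠ 0) ∧
      ((calG A B ζ).charpoly.roots.filter fun μ => 0 < μ.re).card = N ∧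
      ((calG A B ζ).charpoly.roots.filter fun μ => μ.re < 0).card = N := by
  have hne : ∀ μ ∈ spectrum ℂ (calG A B ζ), μ.re ≠ 0 := fun μ =>
    h.re_ne_zero_of_mem_spectrum_calG hc ⟨hζ, hγ⟩
  have h_base : IsParabolicWith c 0 B := by simpa using h.smul 0
  have hsum := eigenvalueCount_re_pos_add_re_neg hne
  have hsum_base := eigenvalueCount_re_pos_add_re_neg fun μ =>
    h_base.re_ne_zero_of_mem_spectrum_calG hc (zero_zero_one_mem_admissibleFreq m) (μ := μ)
  have hhomotopy := h.eigenvalueCount_calG_eq hc ⟨hζ, hγ⟩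
  have hsymm := eigenvalueCount_re_pos_calG_zero_eq_re_neg B 0 1
  rw [Fintype.card_sum, Fintype.card_fin] at hsum hsum_base
  rw [card_filter_roots_charpoly, card_filter_roots_charpoly]
  exact ⟨hne, by lia, by lia⟩

end BoundarySymbol

noncomputable section

/-- Under (H0)–(H3), for `ζ ≠ 0` with `γ ≥ 0`, the matrix `𝒢(p, ζ)` has no
purely imaginary eigenvalue and has exactly `N` eigenvalues of positive real part and `N` of
negative real part, counted with algebraic multiplicity. -/
theorem calG_hyperbolic_splitting {M N m : ℕ} (𝒪 : Set (Fin M → ℝ)) (hO : IsOpen 𝒪)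
    (A : Fin (m + 1) → (Fin M → ℝ) → Matrix (Fin N) (Fin N) ℝ)
    (B : Fin (m + 1) → Fin (m + 1) → (Fin M → ℝ) → Matrix (Fin N) (Fin N) ℝ)
    (h0 : HypH0 𝒪 A B) (h1 : HypH1 𝒪 A) (h2 : HypH2 𝒪 A B) (h3 : HypH3 𝒪 A)
    (p : Fin M → ℝ) (hp : p ∈ 𝒪) (ζ : Freq m) (hζ : ζ ≠ 0) (hγ : 0 ≤ ζ.2.2) :
    (∀ μ ∈ spectrum ℂ (calG (fun j => A j p) (fun j k => B j k p) ζ), μ.re ≠ 0) ∧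
    ((calG (fun j => A j p) (fun j k => B j k p) ζ).charpoly.roots.filter
        (fun μ => 0 < μ.re)).card = N ∧
    ((calG (fun j => A j p) (fun j k => B j k p) ζ).charpoly.roots.filter
        (fun μ => μ.re < 0)).card = N := by
  obtain ⟨c, hc, hparabolic⟩ := h2
  exact calG_hyperbolic_splitting_general (hparabolic p hp) hc hζ hγ

end
end

section
/- Let G ∈ M_n(ℂ) have no purely imaginary eigenvalue and let E₋(G) be the invariant subspace spanned by the generalized eigenvectors of G for eigenvalues with Re μ < 0. Let ℂⁿ = F₋ ⊕ F₊ with associated projections Π₋, Π₊, let κ > 1, and let S ∈ M_n(ℂ) be Hermitian such that ⟨SU, U⟩ ≥ κ² |Π₊U|² − |Π₋U|² for all U ∈ ℂⁿ and Re ⟨S G V, V⟩ ≥ 0 for all V ∈ ℂⁿ. Then every U ∈ E₋(G) satisfies |Π₊U| ≤ (1/(κ − 1)) |U|. -/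
/-!
For `U` in the stable subspace of `G`, the solution `u` of `u' = G u`, `u 0 = U` decays at `+∞`:
on a generalized eigenvector it is `exp (μ x)` times a polynomial in `x`. Along this solution
`Re ⟨S u, u⟩` has derivative `2 Re ⟨S G u, u⟩ ≥ 0` and tends to `0`, so it is nonpositive at
`x = 0`. The lower bound on `S` then gives `κ |Π₊U| ≤ |Π₋U| ≤ |U| + |Π₊U|`.
-/

open Matrix

noncomputable section

open Filter Topology Finset
open scoped Nat

section ExpTaylor

variable {𝕜 E : Type*} [Field 𝕜] [AddCommGroup E] [Module 𝕜 E]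

/-- The first `m` terms of the Taylor series of `exp (x N) U`. It is the whole series, hence the
solution of `u' = N u` issued from `U`, as soon as `N ^ m` kills `U`. -/
def expTaylor (N : Module.End 𝕜 E) (m : ℕ) (U : E) (x : 𝕜) : E :=
  ∑ k ∈ range m, ((k ! : 𝕜)⁻¹ * x ^ k) • (N ^ k) U

lemma expTaylor_succ (N : Module.End 𝕜 E) (m : ℕ) (U : E) (x : 𝕜) :
    expTaylor N (m + 1) U x = expTaylor N m U x + ((m ! : 𝕜)⁻¹ * x ^ m) • (N ^ m) U :=
  sum_range_succ _ m

lemma expTaylor_succ_zero (N : Module.End 𝕜 E) (m : ℕ) (U : E) :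
    expTaylor N (m + 1) U 0 = U := by
  simp [expTaylor, sum_range_succ']

end ExpTaylor

section ExpTaylorDeriv

variable {𝕜 E : Type*} [NontriviallyNormedField 𝕜] [CharZero 𝕜] [NormedAddCommGroup E]
  [NormedSpace 𝕜 E]

lemma hasDerivAt_inv_factorial_mul_pow (k : ℕ) (x : 𝕜) :
    HasDerivAt (fun x : 𝕜 => ((k + 1)! : 𝕜)⁻¹ * x ^ (k + 1)) ((k ! : 𝕜)⁻¹ * x ^ k) x := by
  have factorial_ne_zero : (k ! : 𝕜) ≠ 0 := Nat.cast_ne_zero.2 k.factorial_ne_zero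
  have succ_ne_zero : (k + 1 : 𝕜) ≠ 0 := k.cast_add_one_ne_zero
  refine ((hasDerivAt_pow (k + 1) x).const_mul _).congr_deriv ?_
  rw [Nat.factorial_succ]
  push_cast
  field_simp

lemma hasDerivAt_expTaylor_succ (N : Module.End 𝕜 E) (m : ℕ) (U : E) (x : 𝕜) :
    HasDerivAt (expTaylor N (m + 1) U) (N (expTaylor N m U x)) x := by
  induction m with
  | zero =>
    have expTaylor_one : expTaylor N 1 U = fun _ => U := by ext; simp [expTaylor]
    simpa [expTaylor_one, expTaylor] using hasDerivAt_const x U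
  | succ m ih =>
    have next_term := (hasDerivAt_inv_factorial_mul_pow m x).smul_const ((N ^ (m + 1)) U)
    rw [funext (expTaylor_succ N (m + 1) U), expTaylor_succ, map_add, map_smul,
      ← Module.End.mul_apply, ← pow_succ']
    exact ih.add next_term

end ExpTaylorDeriv

section DecayingSubspace

variable {E : Type*} [NormedAddCommGroup E] [NormedSpace ℂ E]

/-- The initial values of those solutions of `u' = f u` on `ℝ` that tend to `0` at `+∞`. -/
def decayingSubspace (f : Module.End ℂ E) : Submodule ℂ E where
  carrier := {U | ∃ u : ℝ → E, u 0 = U ∧ (∀ x, HasDerivAt u (f (u x)) x) ∧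
    Tendsto u atTop (𝓝 0)}
  zero_mem' := ⟨0, rfl, fun x => by simp [Pi.zero_def, hasDerivAt_const], tendsto_const_nhds⟩
  add_mem' := by
    rintro _ _ ⟨u, rfl, hu, hu_lim⟩ ⟨v, rfl, hv, hv_lim⟩
    refine ⟨fun x => u x + v x, rfl, fun x => ?_, by simpa using hu_lim.add hv_lim⟩
    simpa using (hu x).fun_add (hv x)
  smul_mem' := by
    rintro c _ ⟨u, rfl, hu, hu_lim⟩
    refine ⟨fun x => c • u x, rfl, fun x => ?_, by simpa using hu_lim.const_smul c⟩
    simpa using (hu x).fun_const_smul c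

lemma tendsto_cexp_mul_pow_atTop_nhds_zero {μ : ℂ} (hμ : μ.re < 0) (k : ℕ) :
    Tendsto (fun x : ℝ => Complex.exp (μ * x) * (x : ℂ) ^ k) atTop (𝓝 0) := by
  rw [tendsto_zero_iff_norm_tendsto_zero]
  refine (isLittleO_pow_exp_pos_mul_atTop k (neg_pos.2 hμ)).norm_left.tendsto_div_nhds_zero.congr
    fun x => ?_
  simp [Complex.norm_exp, Real.exp_neg, mul_comm]

lemma hasDerivAt_cexp_smul_expTaylor (f : Module.End ℂ E) (μ : ℂ) {m : ℕ} {U : E}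
    (hU : ((f - μ • 1) ^ m) U = 0) (z : ℂ) :
    HasDerivAt (fun z => Complex.exp (μ * z) • expTaylor (f - μ • 1) (m + 1) U z)
      (f (Complex.exp (μ * z) • expTaylor (f - μ • 1) (m + 1) U z)) z := by
  have expTaylor_stationary : expTaylor (f - μ • 1) (m + 1) U z = expTaylor (f - μ • 1) m U z := by
    rw [expTaylor_succ, hU, smul_zero, add_zero]
  have exp_deriv : HasDerivAt (fun z => Complex.exp (μ * z)) (Complex.exp (μ * z) * μ) z :=
    (hasDerivAt_const_mul μ).cexp
  refine (exp_deriv.smul (hasDerivAt_expTaylor_succ (f - μ • 1) m U z)).congr_deriv ?_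
  rw [expTaylor_stationary, map_smul, LinearMap.sub_apply, LinearMap.smul_apply,
    Module.End.one_apply]
  module

lemma tendsto_cexp_smul_expTaylor {μ : ℂ} (hμ : μ.re < 0) (N : Module.End ℂ E) (m : ℕ) (U : E) :
    Tendsto (fun x : ℝ => Complex.exp (μ * x) • expTaylor N m U (x : ℂ)) atTop (𝓝 0) := by
  have term_tendsto (k : ℕ) :
      Tendsto (fun x : ℝ => (Complex.exp (μ * x) * ((k ! : ℂ)⁻¹ * (x : ℂ) ^ k)) • (N ^ k) U)
        atTop (𝓝 0) := by
    simpa [mul_left_comm] using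
      ((tendsto_cexp_mul_pow_atTop_nhds_zero hμ k).const_mul (k ! : ℂ)⁻¹).smul_const ((N ^ k) U)
  simpa [expTaylor, smul_sum, smul_smul] using
    tendsto_finsetSum (range m) fun k _ => term_tendsto k

lemma maxGenEigenspace_le_decayingSubspace (f : Module.End ℂ E) {μ : ℂ} (hμ : μ.re < 0) :
    f.maxGenEigenspace μ ≤ decayingSubspace f := by
  intro U hU
  obtain ⟨m, hm⟩ := (f.mem_maxGenEigenspace μ U).1 hU
  refine ⟨fun x => Complex.exp (μ * x) • expTaylor (f - μ • 1) (m + 1) U (x : ℂ), ?_,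
    fun x => ?_, tendsto_cexp_smul_expTaylor hμ _ _ U⟩
  · simp [expTaylor_succ_zero]
  · simpa using! (hasDerivAt_cexp_smul_expTaylor f μ hm x).scomp x Complex.ofRealCLM.hasDerivAt

lemma stableSubspace_le_decayingSubspace (f : Module.End ℂ E) :
    stableSubspace f ≤ decayingSubspace f :=
  iSup₂_le fun _ hμ => maxGenEigenspace_le_decayingSubspace f hμ

end DecayingSubspace

section Symmetrizer

lemma hasDerivAt_reApplyInnerSelf_comp {𝕜 E : Type*} [RCLike 𝕜] [NormedAddCommGroup E]
    [InnerProductSpace 𝕜 E] [NormedSpace ℝ E] [IsScalarTower ℝ 𝕜 E] {S : E →L[𝕜] E}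
    (hS : S.IsSymmetric) {u : ℝ → E} {u' : E} {x : ℝ} (hu : HasDerivAt u u' x) :
    HasDerivAt (fun x => S.reApplyInnerSelf (u x)) (2 * RCLike.re (inner 𝕜 (S u') (u x))) x := by
  have S_deriv : HasDerivAt (fun x => S (u x)) (S u') x :=
    (S.restrictScalars ℝ).hasFDerivAt.comp_hasDerivAt x hu
  have cross_term : RCLike.re (inner 𝕜 (S (u x)) u') = RCLike.re (inner 𝕜 (S u') (u x)) := by
    rw [hS.apply_clm, inner_re_symm]
  refine (RCLike.reCLM.hasFDerivAt.comp_hasDerivAt x (S_deriv.inner 𝕜 hu)).congr_deriv ?_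
  rw [RCLike.reCLM_apply, map_add, cross_term, two_mul]

lemma norm_le_one_div_mul_norm_add_of_sq_le {E : Type*} [SeminormedAddCommGroup E] {κ : ℝ}
    (hκ : 1 < κ) {v w : E} (h : κ ^ 2 * ‖v‖ ^ 2 ≤ ‖w‖ ^ 2) : ‖v‖ ≤ 1 / (κ - 1) * ‖w + v‖ := by
  have mul_norm_le : κ * ‖v‖ ≤ ‖w‖ := le_of_sq_le_sq (by rwa [mul_pow]) (norm_nonneg w)
  have norm_le_add : ‖w‖ ≤ ‖w + v‖ + ‖v‖ := by simpa using norm_sub_le (w + v) v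
  rw [one_div_mul_eq_div, le_div_iff₀ (sub_pos.2 hκ)]
  linarith

variable {E : Type*} [NormedAddCommGroup E] [InnerProductSpace ℂ E]

lemma reApplyInnerSelf_nonpos_of_mem_decayingSubspace {G : Module.End ℂ E} {S : E →L[ℂ] E}
    (hS : S.IsSymmetric) (hdiss : ∀ V, 0 ≤ (inner ℂ (S (G V)) V).re) {U : E}
    (hU : U ∈ decayingSubspace G) : S.reApplyInnerSelf U ≤ 0 := by
  obtain ⟨u, rfl, hu, hu_lim⟩ := hU
  have monotone_energy : Monotone fun x => S.reApplyInnerSelf (u x) :=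
    monotone_of_hasDerivAt_nonneg (fun x => hasDerivAt_reApplyInnerSelf_comp hS (hu x))
      fun x => mul_nonneg zero_le_two (hdiss (u x))
  have energy_lim : Tendsto (fun x => S.reApplyInnerSelf (u x)) atTop (𝓝 0) := by
    simpa [S.reApplyInnerSelf_apply, Function.comp_def] using
      (S.reApplyInnerSelf_continuous.tendsto 0).comp hu_lim
  exact monotone_energy.ge_of_tendsto energy_lim 0

theorem stable_subspace_small_plus_component_general (G : Module.End ℂ E) {Fm Fp : Submodule ℂ E}
    (hc : IsCompl Fm Fp) {κ : ℝ} (hκ : 1 < κ) (S : E →L[ℂ] E) (hS : S.IsSymmetric)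
    (hlower : ∀ U, κ ^ 2 * ‖Fp.projection Fm hc.symm U‖ ^ 2 -
      ‖Fm.projection Fp hc U‖ ^ 2 ≤ (inner ℂ (S U) U).re)
    (hdiss : ∀ V, 0 ≤ (inner ℂ (S (G V)) V).re) :
    ∀ U ∈ stableSubspace G, ‖Fp.projection Fm hc.symm U‖ ≤ 1 / (κ - 1) * ‖U‖ := by
  intro U hU
  have energy_nonpos : (inner ℂ (S U) U).re ≤ 0 :=
    reApplyInnerSelf_nonpos_of_mem_decayingSubspace hS hdiss
      (stableSubspace_le_decayingSubspace G hU)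
  have plus_le_minus : κ ^ 2 * ‖Fp.projection Fm hc.symm U‖ ^ 2 ≤
      ‖Fm.projection Fp hc U‖ ^ 2 := by
    linarith [hlower U]
  simpa only [Submodule.projection_add_projection_eq_self hc U] using
    norm_le_one_div_mul_norm_add_of_sq_le hκ plus_le_minus

end Symmetrizer

/-- A symmetrizer estimate forces vectors of the stable subspace of `G` to
have a small component on `F₊`. -/
theorem stable_subspace_small_plus_component {n : ℕ}
    (G : Matrix (Fin n) (Fin n) ℂ)
    (hG : ∀ μ ∈ spectrum ℂ G, μ.re ≠ 0)
    (Fm Fp : Submodule ℂ (EuclideanSpace ℂ (Fin n))) (hc : IsCompl Fm Fp)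
    (κ : ℝ) (hκ : 1 < κ)
    (S : Matrix (Fin n) (Fin n) ℂ) (hS : Sᴴ = S)
    (hlower : ∀ U : EuclideanSpace ℂ (Fin n),
      κ ^ 2 * ‖Submodule.linearProjOfIsCompl Fp Fm hc.symm U‖ ^ 2 -
          ‖Submodule.linearProjOfIsCompl Fm Fp hc U‖ ^ 2 ≤
        (inner ℂ (Matrix.toEuclideanLin S U) U : ℂ).re)
    (hdiss : ∀ V : EuclideanSpace ℂ (Fin n),
      0 ≤ (inner ℂ (Matrix.toEuclideanLin (S * G) V) V : ℂ).re) :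
    ∀ U ∈ stableSubspace (Matrix.toEuclideanLin G),
      ‖Submodule.linearProjOfIsCompl Fp Fm hc.symm U‖ ≤ (1 / (κ - 1)) * ‖U‖ := by
  exact stable_subspace_small_plus_component_general (toEuclideanLin G) hc hκ
    (toEuclideanLin S).toContinuousLinearMap (isSymmetric_toEuclideanLin_iff.2 hS) hlower
    (by simpa only [toLpLin_mul_same] using! hdiss)

end
end

section
/- Under Assumptions (H0)–(H3), for every p̲ ∈ 𝒪 there exist a neighborhood ω of (p̲, 0) in ℝ^M × ℝ^{d+1}, a constant c > 0, and C^∞ maps 𝒱 : ω → GL_{2N}(ℂ), H : ω → M_N(ℂ), P : ω → M_N(ℂ) such that for all (p, ζ) ∈ ω: 𝒱(p,ζ)^{-1} 𝒢(p,ζ) 𝒱(p,ζ) is the block diagonal matrix diag(H(p,ζ), P(p,ζ)); H(p, 0) = 0 and P(p, 0) = B_{d,d}(p)^{-1} A_d(p); every eigenvalue μ of P(p, ζ) satisfies |Re μ| ≥ c; and H(p, ζ) = −A_d(p)^{-1}((iτ + γ) Id + Σ_{j=1}^{d-1} i η_j A_j(p)) + O(|ζ|²) as ζ → 0, uniformly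 for p near p̲. -/
open Matrix Complex
open scoped ContDiff

noncomputable section

/-- The first-order part `−A_d(p)⁻¹((iτ + γ) Id + Σ_{j<d} i η_j A_j(p))` of the hyperbolic
block. -/
def hypBlockLin {M N m : ℕ} (A : Fin (m + 1) → (Fin M → ℝ) → Matrix (Fin N) (Fin N) ℝ)
    (p : Fin M → ℝ) (ζ : Freq m) : Matrix (Fin N) (Fin N) ℂ :=
  -((cmap (A (Fin.last m) p))⁻¹ *
    ((Complex.I * (ζ.1 : ℂ) + (ζ.2.2 : ℂ)) • (1 : Matrix (Fin N) (Fin N) ℂ) +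
      ∑ j : Fin m, (Complex.I * (ζ.2.1 j : ℂ)) • cmap (A j.castSucc p)))

/-!
A matrix `X` with `X² = 𝒜 X + ℳ` has a graph invariant under the companion matrix `𝒢`, and two such
solvents `H`, `P` with `P - H` invertible block diagonalize `𝒢` through the block Vandermonde matrix
`𝒱 = [[1, 1], [H, P]]`. At `ζ = 0`, where `ℳ = 0`, the equation has the solutions `0` and
`B_{d,d}⁻¹ A_d`. Both are nondegenerate because `A_d` is invertible, so by the implicit
function theorem they continue smoothly to `H` and `P`.

The expansion of `H` is read off `(𝒜 - H) H = -ℳ`: first `H = O(|ℳ|) = O(|ζ|)`, and then replacing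
`𝒜 - H` by `B_{d,d}⁻¹ A_d` costs `O(|ζ|²)`. Parabolicity in the normal direction says that
`i t A_d + t² B_{d,d}` is invertible for real `t ≠ 0`, so `B_{d,d}⁻¹ A_d` has no eigenvalue on the
imaginary axis, and semicontinuity of the spectrum preserves this gap for `P`.
-/

open Filter Asymptotics
open scoped Topology Ring

section Solvents

/-- `x` is a right solvent of the monic quadratic `X ^ 2 - a * X - m` over a possibly
noncommutative ring. For matrices this says that the graph `{(v, x v)}` is invariant under the
companion matrix `[[0, 1], [m, a]]`. -/
def IsSolvent {R : Type*} [Ring R] (a m x : R) : Prop :=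
  x * x = a * x + m

/-- A pair of solvents of `X ^ 2 - a * X - m` with invertible difference, so that the block
Vandermonde matrix `[[1, 1], [h, p]]` is invertible. The last two fields place `h` on the branch
that vanishes with `m` and `p` on the branch that becomes `a`. -/
structure IsSolventPair {R : Type*} [Ring R] (a m h p : R) : Prop where
  left : IsSolvent a m h
  right : IsSolvent a m p
  isUnit_sub : IsUnit (p - h)
  isUnit_sub_left : IsUnit (a - h)
  isUnit_right : IsUnit p

theorem IsSolvent.sub_mul_self {R : Type*} [Ring R] {a m x : R} (hx : IsSolvent a m x) :
    (a - x) * x = -m := by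
  rw [sub_mul, show x * x = a * x + m from hx]
  abel

theorem IsSolventPair.left_eq_zero {R : Type*} [Ring R] {a h p : R}
    (hhp : IsSolventPair a 0 h p) : h = 0 :=
  hhp.isUnit_sub_left.mul_right_eq_zero.1 (by simpa using hhp.left.sub_mul_self)

theorem IsSolventPair.right_eq {R : Type*} [Ring R] {a h p : R}
    (hhp : IsSolventPair a 0 h p) : p = a :=
  hhp.isUnit_right.mul_right_cancel (by simpa [IsSolvent] using hhp.right)

variable {n α : Type*} [Fintype n] [DecidableEq n] [CommRing α] {a m h p : Matrix n n α}

/-- The block Vandermonde matrix `[[1, 1], [h, p]]`, whose block columns span the graphs of `h` and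
`p`. -/
def blockVandermonde (h p : Matrix n n α) : Matrix (n ⊕ n) (n ⊕ n) α :=
  fromBlocks 1 1 h p

theorem IsSolventPair.isUnit_blockVandermonde (hhp : IsSolventPair a m h p) :
    IsUnit (blockVandermonde h p) := by
  rw [blockVandermonde, isUnit_iff_isUnit_det, det_fromBlocks_one₁₁, mul_one,
    ← isUnit_iff_isUnit_det]
  exact hhp.isUnit_sub

theorem IsSolventPair.blockVandermonde_inv_mul_companion_mul (hhp : IsSolventPair a m h p) :
    (blockVandermonde h p)⁻¹ * fromBlocks 0 1 m a * blockVandermonde h p =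
      fromBlocks h 0 0 p := by
  have companion_mul : fromBlocks 0 1 m a * blockVandermonde h p =
      blockVandermonde h p * fromBlocks h 0 0 p := by
    simp [blockVandermonde, fromBlocks_multiply, show h * h = a * h + m from hhp.left,
      show p * p = a * p + m from hhp.right, add_comm]
  rw [mul_assoc, companion_mul,
    nonsing_inv_mul_cancel_left _ _ ((isUnit_iff_isUnit_det _).1 hhp.isUnit_blockVandermonde)]

end Solvents

section SolventBranches

variable {𝕜 R : Type*} [RCLike 𝕜] [NormedRing R] [NormedAlgebra 𝕜 R]

theorem isInvertible_mulLeft {a : R} (ha : IsUnit a) :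
    (ContinuousLinearMap.mul 𝕜 R a).IsInvertible := by
  obtain ⟨u, rfl⟩ := ha
  exact ⟨.equivOfInverse (.mul 𝕜 R u) (.mul 𝕜 R ↑u⁻¹) (fun x ↦ by simp) (fun x ↦ by simp), rfl⟩

theorem isInvertible_mulRight {a : R} (ha : IsUnit a) :
    ((ContinuousLinearMap.mul 𝕜 R).flip a).IsInvertible := by
  obtain ⟨u, rfl⟩ := ha
  exact ⟨.equivOfInverse ((ContinuousLinearMap.mul 𝕜 R).flip u)
    ((ContinuousLinearMap.mul 𝕜 R).flip ↑u⁻¹) (fun x ↦ by simp) (fun x ↦ by simp), rfl⟩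

variable [CompleteSpace R]

theorem exists_solvent_branch {a m s : R} (hs : IsSolvent a m s)
    (hinv : (ContinuousLinearMap.mul 𝕜 R (s - a) +
      (ContinuousLinearMap.mul 𝕜 R).flip s).IsInvertible) :
    ∃ Φ : R × R → R, ContDiffAt 𝕜 ω Φ (a, m) ∧ Φ (a, m) = s ∧
      ∀ᶠ y in 𝓝 (a, m), IsSolvent y.1 y.2 (Φ y) := by
  let F : (R × R) × R → R := fun z ↦ z.2 * z.2 - z.1.1 * z.2 - z.1.2
  have hF : ContDiffAt 𝕜 ω F ((a, m), s) := ContDiff.contDiffAt (by fun_prop)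
  have hpartial : HasFDerivAt (fun x ↦ F ((a, m), x))
      (.mul 𝕜 R (s - a) + (ContinuousLinearMap.mul 𝕜 R).flip s) s := by
    have hid : HasFDerivAt (fun x : R ↦ x) (.id 𝕜 R) s := hasFDerivAt_id s
    refine (((hid.mul' hid).sub (hid.const_mul a)).sub_const m).congr_fderiv ?_
    ext x
    simp only [_root_.sub_apply, _root_.add_apply, _root_.smul_apply,
      ContinuousLinearMap.id_apply, smul_eq_mul, MulOpposite.smul_eq_mul_unop,
      MulOpposite.unop_op, map_sub, ContinuousLinearMap.mul_apply',
      ContinuousLinearMap.flip_apply]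
    abel
  have hfderiv : fderiv 𝕜 F ((a, m), s) ∘L .inr 𝕜 (R × R) R =
      .mul 𝕜 R (s - a) + (ContinuousLinearMap.mul 𝕜 R).flip s :=
    ((hF.differentiableAt (by simp)).hasFDerivAt.comp s
      (hasFDerivAt_prodMk_right (a, m) s)).unique hpartial
  rw [← hfderiv] at hinv
  refine ⟨hF.implicitFunction (by simp) hinv, hF.contDiffAt_implicitFunction (by simp) hinv,
    hF.implicitFunction_apply_self (by simp) hinv, ?_⟩
  filter_upwards [hF.eventually_apply_implicitFunction (by simp) hinv] with y hy
  have hFs : F ((a, m), s) = 0 := by simp [F, show s * s = a * s + m from hs]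
  rw [hFs] at hy
  rwa [IsSolvent, ← sub_eq_zero, ← sub_sub]

theorem eventually_isUnit_of_tendsto {ι : Type*} {l : Filter ι} {f : ι → R} {a : R}
    (hf : Tendsto f l (𝓝 a)) (ha : IsUnit a) : ∀ᶠ i in l, IsUnit (f i) :=
  hf.eventually (Units.isOpen.mem_nhds ha)

/- At `m = 0` the quadratic `X ^ 2 - a * X` has the solvents `0` and `a`; its linearizations there
are `x ↦ -a * x` and `x ↦ x * a`, both invertible. -/
theorem exists_solventPair_branches {a : R} (ha : IsUnit a) :
    ∃ Φ Ψ : R × R → R, ∀ᶠ y in 𝓝 (a, 0),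
      ContDiffAt 𝕜 ω Φ y ∧ ContDiffAt 𝕜 ω Ψ y ∧ IsSolventPair y.1 y.2 (Φ y) (Ψ y) := by
  obtain ⟨Φ, hΦ, hΦ₀, hΦsolv⟩ := exists_solvent_branch (𝕜 := 𝕜) (a := a) (m := 0) (s := 0)
    (by simp [IsSolvent]) (by simpa using isInvertible_mulLeft (𝕜 := 𝕜) ha.neg)
  obtain ⟨Ψ, hΨ, hΨ₀, hΨsolv⟩ := exists_solvent_branch (𝕜 := 𝕜) (a := a) (m := 0) (s := a)
    (by simp [IsSolvent]) (by simpa using isInvertible_mulRight (𝕜 := 𝕜) ha)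
  have tendsto_Φ : Tendsto Φ (𝓝 (a, 0)) (𝓝 0) := by
    simpa only [hΦ₀] using hΦ.continuousAt.tendsto
  have tendsto_Ψ : Tendsto Ψ (𝓝 (a, 0)) (𝓝 a) := by
    simpa only [hΨ₀] using hΨ.continuousAt.tendsto
  have tendsto_fst : Tendsto Prod.fst (𝓝 (a, (0 : R))) (𝓝 a) := continuousAt_fst
  have isUnit_Ψ_sub_Φ := eventually_isUnit_of_tendsto (tendsto_Ψ.sub tendsto_Φ) (by simpa using ha)
  have isUnit_sub_Φ := eventually_isUnit_of_tendsto (tendsto_fst.sub tendsto_Φ) (by simpa using ha)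
  refine ⟨Φ, Ψ, ?_⟩
  filter_upwards [hΦ.eventually (by simp), hΨ.eventually (by simp), hΦsolv, hΨsolv,
    isUnit_Ψ_sub_Φ, isUnit_sub_Φ, eventually_isUnit_of_tendsto tendsto_Ψ ha]
    with y hΦy hΨy solv_Φ solv_Ψ unit_sub unit_sub_Φ unit_Ψ
  exact ⟨hΦy, hΨy, solv_Φ, solv_Ψ, unit_sub, unit_sub_Φ, unit_Ψ⟩

theorem exists_eventually_isSolventPair {X : Type*} [NormedAddCommGroup X] [NormedSpace 𝕜 X]
    {n : ℕ∞ω} {a m : X → R} {x₀ : X} (ha : ∀ᶠ x in 𝓝 x₀, ContDiffAt 𝕜 n a x)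
    (hm : ∀ᶠ x in 𝓝 x₀, ContDiffAt 𝕜 n m x) (ha₀ : IsUnit (a x₀)) (hm₀ : m x₀ = 0) :
    ∃ H P : X → R, ∀ᶠ x in 𝓝 x₀,
      ContDiffAt 𝕜 n H x ∧ ContDiffAt 𝕜 n P x ∧ IsSolventPair (a x) (m x) (H x) (P x) := by
  obtain ⟨Φ, Ψ, hΦΨ⟩ := exists_solventPair_branches (𝕜 := 𝕜) ha₀
  have tendsto_coeff : Tendsto (fun x ↦ (a x, m x)) (𝓝 x₀) (𝓝 (a x₀, 0)) := by
    rw [← hm₀]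
    exact ha.self_of_nhds.continuousAt.prodMk hm.self_of_nhds.continuousAt
  refine ⟨fun x ↦ Φ (a x, m x), fun x ↦ Ψ (a x, m x), ?_⟩
  filter_upwards [ha, hm, tendsto_coeff.eventually hΦΨ] with x hax hmx ⟨hΦx, hΨx, hpair⟩
  exact ⟨(hΦx.of_le le_top).comp x (hax.prodMk hmx), (hΨx.of_le le_top).comp x (hax.prodMk hmx),
    hpair⟩

end SolventBranches

section SolventAsymptotics

variable {R ι : Type*} [NormedRing R] [CompleteSpace R] {l : Filter ι}

theorem isBigO_ringInverse_one_of_tendsto {f : ι → R} {a : R} (hf : Tendsto f l (𝓝 a))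
    (ha : IsUnit a) : (fun i ↦ (f i)⁻¹ʳ) =O[l] (fun _ ↦ (1 : ℝ)) := by
  obtain ⟨u, rfl⟩ := ha
  exact ((NormedRing.inverse_continuousAt u).tendsto.comp hf).isBigO_one ℝ

variable {a a₀ m h : ι → R} {u : R}

/- Since `(a - h) * h = -m` and `a - h` stays invertible, `h = -(a - h)⁻¹ * m`. -/
theorem isBigO_of_isSolvent (ha : Tendsto a l (𝓝 u)) (hu : IsUnit u) (hh : Tendsto h l (𝓝 0))
    (hsolv : ∀ᶠ i in l, IsSolvent (a i) (m i) (h i)) : h =O[l] m := by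
  have tendsto_sub : Tendsto (fun i ↦ a i - h i) l (𝓝 u) := by simpa using ha.sub hh
  have hbound : (fun i ↦ (a i - h i)⁻¹ʳ * -m i) =O[l] (fun i ↦ 1 * ‖m i‖) :=
    (isBigO_ringInverse_one_of_tendsto tendsto_sub hu).mul (isBigO_refl m l).neg_left.norm_right
  simp only [one_mul, isBigO_norm_right] at hbound
  refine hbound.congr' ?_ .rfl
  filter_upwards [hsolv, eventually_isUnit_of_tendsto tendsto_sub hu] with i hi hunit
  rw [← hi.sub_mul_self, Ring.inverse_mul_cancel_left _ _ hunit]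

theorem isBigO_add_inverse_mul_of_isSolvent {g : ι → ℝ} (ha : Tendsto a l (𝓝 u))
    (ha₀ : Tendsto a₀ l (𝓝 u)) (hu : IsUnit u) (hh : Tendsto h l (𝓝 0))
    (hsolv : ∀ᶠ i in l, IsSolvent (a i) (m i) (h i)) (hm : m =O[l] g)
    (haa₀ : (fun i ↦ a i - a₀ i) =O[l] g) :
    (fun i ↦ h i + (a₀ i)⁻¹ʳ * m i) =O[l] (fun i ↦ g i ^ 2) := by
  have hhg : h =O[l] g := (isBigO_of_isSolvent ha hu hh hsolv).trans hm
  have hquadratic := (isBigO_ringInverse_one_of_tendsto ha₀ hu).mul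
    ((hhg.mul hhg).sub (haa₀.mul hhg))
  refine hquadratic.congr' ?_ (.of_forall fun i ↦ by ring)
  filter_upwards [hsolv, eventually_isUnit_of_tendsto ha₀ hu] with i hi hunit
  have key : h i * h i - (a i - a₀ i) * h i = a₀ i * h i + m i := by
    rw [show h i * h i = a i * h i + m i from hi, sub_mul]
    abel
  rw [key, mul_add, Ring.inverse_mul_cancel_left _ _ hunit]

end SolventAsymptotics

section Spectrum

theorem exists_pos_eventually_le_abs_re_of_mem_spectrum {R : Type*} [NormedRing R]
    [NormedAlgebra ℂ R] [CompleteSpace R] {a : R} (ha : ∀ μ ∈ spectrum ℂ a, μ.re ≠ 0) :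
    ∃ c > (0 : ℝ), ∀ᶠ b in 𝓝 a, ∀ μ ∈ spectrum ℂ b, c ≤ |μ.re| := by
  obtain ⟨c, hc, hca⟩ := (spectrum.isCompact (𝕜 := ℂ) a).exists_forall_le'
    (f := fun μ ↦ |μ.re|) (by fun_prop) (fun μ hμ ↦ abs_pos.2 (ha μ hμ))
  have hopen : IsOpen {μ : ℂ | c / 2 < |μ.re|} := isOpen_lt (by fun_prop) (by fun_prop)
  refine ⟨c / 2, half_pos hc, ?_⟩
  filter_upwards [((upperHemicontinuous_spectrum ℂ R).upperHemicontinuousAt a).forall_isOpen _ hopen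
    fun μ hμ ↦ (half_lt_self hc).trans_le (hca μ hμ)] with b hb μ hμ
  exact (hb hμ).le

theorem pow_card_le_norm_det {n K : Type*} [Fintype n] [DecidableEq n] [NormedField K]
    [IsAlgClosed K] {S : Matrix n n K} {c : ℝ} (hc : 0 ≤ c) (h : ∀ μ ∈ spectrum K S, c ≤ ‖μ‖) :
    c ^ Fintype.card n ≤ ‖S.det‖ := by
  lift c to NNReal using hc
  have card_roots : S.charpoly.roots.card = Fintype.card n := by
    rw [← (IsAlgClosed.splits S.charpoly).natDegree_eq_card_roots, charpoly_natDegree_eq_dim]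
  have hprod : c ^ (S.charpoly.roots.map nnnormHom).card ≤
      (S.charpoly.roots.map nnnormHom).prod := by
    refine Multiset.pow_card_le_prod fun x hx ↦ ?_
    obtain ⟨μ, hμ, rfl⟩ := Multiset.mem_map.1 hx
    exact h μ (mem_spectrum_iff_isRoot_charpoly.2 (Polynomial.isRoot_of_mem_roots hμ))
  rw [Multiset.card_map, card_roots, ← map_multiset_prod, ← det_eq_prod_roots_charpoly] at hprod
  exact_mod_cast hprod

theorem isUnit_of_tendsto_of_le_norm_spectrum {n K ι : Type*} [Fintype n] [DecidableEq n]
    [NormedField K] [IsAlgClosed K] {l : Filter ι} [l.NeBot] {S : ι → Matrix n n K}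
    {T : Matrix n n K} {c : ℝ} (hc : 0 < c) (hS : Tendsto S l (𝓝 T))
    (h : ∀ᶠ i in l, ∀ μ ∈ spectrum K (S i), c ≤ ‖μ‖) : IsUnit T := by
  have tendsto_det : Tendsto (fun i ↦ ‖(S i).det‖) l (𝓝 ‖T.det‖) :=
    ((continuous_id.matrix_det.tendsto T).comp hS).norm
  have hdet : c ^ Fintype.card n ≤ ‖T.det‖ :=
    ge_of_tendsto tendsto_det (h.mono fun i hi ↦ pow_card_le_norm_det hc.le hi)
  rw [isUnit_iff_isUnit_det, isUnit_iff_ne_zero, ← norm_pos_iff]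
  exact (pow_pos hc _).trans_le hdet

end Spectrum

section Parabolicity

theorem re_ne_zero_of_mem_spectrum_of_isUnit_pencil {R : Type*} [Ring R] [Algebra ℂ R] {S T : R}
    (hS : IsUnit S) (hT : IsUnit T)
    (hST : ∀ t : ℝ, t ≠ 0 → IsUnit ((I * (t : ℂ)) • S + ((t * t : ℝ) : ℂ) • T)) :
    ∀ μ ∈ spectrum ℂ (T⁻¹ʳ * S), μ.re ≠ 0 := by
  intro μ hμ hre
  obtain ⟨t, rfl⟩ : ∃ t : ℝ, μ = I * t := ⟨μ.im, Complex.ext (by simp [hre]) (by simp)⟩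
  rcases eq_or_ne t 0 with rfl | ht
  · rw [ofReal_zero, mul_zero, spectrum.zero_mem_iff] at hμ
    exact hμ (hT.ringInverse.mul hS)
  have hIt : I * (t : ℂ) ≠ 0 := by simpa using ht
  have pencil_eq : (I * (t : ℂ)) • S + ((t * t : ℝ) : ℂ) • T =
      -(I * (t : ℂ)) • (T * (algebraMap ℂ R (I * t) - T⁻¹ʳ * S)) := by
    have hsq : ((t * t : ℝ) : ℂ) = -(I * t) * (I * t) := by
      push_cast
      linear_combination (t : ℂ) * t * I_sq
    rw [mul_sub, Ring.mul_inverse_cancel_left _ _ hT, ← Algebra.commutes, ← Algebra.smul_def, hsq]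
    module
  have hunit : IsUnit (T * (algebraMap ℂ R (I * t) - T⁻¹ʳ * S)) :=
    (isUnit_smul_iff (Units.mk0 _ (neg_ne_zero.2 hIt)) _).1 (pencil_eq ▸ hST t ht)
  exact hμ ((hT.unit.isUnit_units_mul _).1 hunit)

/- Dividing the pencil by `t ^ 2` and letting `s = t⁻¹ → 0` gives `T` as a limit of matrices whose
eigenvalues all have real part at least `c`. -/
theorem isUnit_of_forall_le_re_spectrum_pencil {n : Type*} [Fintype n] [DecidableEq n]
    {S T : Matrix n n ℂ} {c : ℝ} (hc : 0 < c)
    (hST : ∀ t : ℝ, ∀ μ ∈ spectrum ℂ ((I * (t : ℂ)) • S + ((t * t : ℝ) : ℂ) • T),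
      c * t ^ 2 ≤ μ.re) : IsUnit T := by
  have hcont : Continuous fun s : ℝ ↦ T + (I * (s : ℂ)) • S := by fun_prop
  have htendsto : Tendsto (fun s : ℝ ↦ T + (I * (s : ℂ)) • S) (𝓝[≠] 0) (𝓝 T) := by
    simpa using (hcont.tendsto 0).mono_left nhdsWithin_le_nhds
  refine isUnit_of_tendsto_of_le_norm_spectrum hc htendsto ?_
  filter_upwards [self_mem_nhdsWithin] with s (hs : s ≠ 0) μ hμ
  have hsℂ : (s : ℂ) ≠ 0 := by exact_mod_cast hs
  have hsinv : ((s⁻¹ * s⁻¹ : ℝ) : ℂ) ≠ 0 := by simpa using hs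
  have rescale : (I * ((s⁻¹ : ℝ) : ℂ)) • S + ((s⁻¹ * s⁻¹ : ℝ) : ℂ) • T =
      ((s⁻¹ * s⁻¹ : ℝ) : ℂ) • (T + (I * (s : ℂ)) • S) := by
    rw [smul_add, smul_smul, add_comm]
    congr 2
    push_cast
    field_simp
  have hmem := spectrum.smul_mem_smul_iff (r := Units.mk0 _ hsinv) |>.2 hμ
  have hre := hST s⁻¹ _ (by rw [rescale]; exact hmem)
  rw [Units.smul_def, Units.val_mk0, smul_eq_mul, re_ofReal_mul, ← sq, mul_comm] at hre
  exact (le_of_mul_le_mul_left hre (by positivity)).trans (re_le_norm μ)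

variable {M N m : ℕ} {𝒪 : Set (Fin M → ℝ)}
  {A : Fin (m + 1) → (Fin M → ℝ) → Matrix (Fin N) (Fin N) ℝ}
  {B : Fin (m + 1) → Fin (m + 1) → (Fin M → ℝ) → Matrix (Fin N) (Fin N) ℝ} {p : Fin M → ℝ}

theorem HypH2.exists_forall_le_re_normal (h2 : HypH2 𝒪 A B) :
    ∃ c > (0 : ℝ), ∀ p ∈ 𝒪, ∀ t : ℝ,
      ∀ μ ∈ spectrum ℂ ((I * (t : ℂ)) • cmap (A (Fin.last m) p) +
        ((t * t : ℝ) : ℂ) • cmap (B (Fin.last m) (Fin.last m) p)), c * t ^ 2 ≤ μ.re := by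
  obtain ⟨c, hc, hre⟩ := h2
  refine ⟨c, hc, fun p hp t μ hμ ↦ ?_⟩
  simpa [Pi.single_apply, ite_and, apply_ite] using hre p hp (Pi.single (Fin.last m) t) μ (by
    simpa [Pi.single_apply, ite_and, apply_ite] using hμ)

theorem HypH2.isUnit_cmap_last (h2 : HypH2 𝒪 A B) (hp : p ∈ 𝒪) :
    IsUnit (cmap (B (Fin.last m) (Fin.last m) p)) := by
  obtain ⟨c, hc, hre⟩ := h2.exists_forall_le_re_normal
  exact isUnit_of_forall_le_re_spectrum_pencil hc (hre p hp)

theorem isUnit_cmap {S : Matrix (Fin N) (Fin N) ℝ} (hS : S.det ≠ 0) : IsUnit (cmap S) :=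
  ((isUnit_iff_isUnit_det S).2 hS.isUnit).map Complex.ofRealHom.mapMatrix

theorem HypH2.re_ne_zero_of_mem_spectrum (h2 : HypH2 𝒪 A B) (h3 : HypH3 𝒪 A) (hp : p ∈ 𝒪) :
    ∀ μ ∈ spectrum ℂ
      ((cmap (B (Fin.last m) (Fin.last m) p))⁻¹ * cmap (A (Fin.last m) p)), μ.re ≠ 0 := by
  rw [nonsing_inv_eq_ringInverse]
  refine re_ne_zero_of_mem_spectrum_of_isUnit_pencil (isUnit_cmap (h3 p hp))
    (h2.isUnit_cmap_last hp) fun t ht ↦ ?_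
  obtain ⟨c, hc, hre⟩ := h2.exists_forall_le_re_normal
  rw [← spectrum.zero_notMem_iff ℂ]
  intro h0
  have hpos : 0 < c * t ^ 2 := by positivity
  exact hpos.not_ge (hre p hp t 0 h0)

end Parabolicity

section MatrixCalculus

attribute [local instance] Matrix.linftyOpNormedRing Matrix.linftyOpNormedAlgebra

variable {n : Type*} [Fintype n] [DecidableEq n]

theorem norm_entry_le_linftyOpNorm {K : Type*} [NormedRing K] (S : Matrix n n K) (i j : n) :
    ‖S i j‖ ≤ ‖S‖ := by
  have hsup : ‖S i j‖₊ ≤ Finset.univ.sup fun i ↦ ∑ j, ‖S i j‖₊ :=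
    (Finset.single_le_sum (fun _ _ ↦ zero_le) (Finset.mem_univ j)).trans
      (Finset.le_sup (f := fun i ↦ ∑ j, ‖S i j‖₊) (Finset.mem_univ i))
  rw [show ‖S‖ = _ from linfty_opNorm_def S]
  exact_mod_cast hsup

theorem contDiffAt_matrix {𝕜 K X : Type*} [NontriviallyNormedField 𝕜] [CompleteSpace 𝕜]
    [NormedRing K] [NormedAlgebra 𝕜 K] [FiniteDimensional 𝕜 K] [NormedAddCommGroup X]
    [NormedSpace 𝕜 X] {r : ℕ∞ω} {f : X → Matrix n n K} {x : X} :
    ContDiffAt 𝕜 r f x ↔ ∀ i j, ContDiffAt 𝕜 r (fun y ↦ f y i j) x := by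
  rw [← (LinearEquiv.toContinuousLinearEquiv (ofLinearEquiv 𝕜).symm :
    Matrix n n K ≃L[𝕜] (n → n → K)).comp_contDiffAt_iff]
  simp only [contDiffAt_pi]
  rfl

theorem contDiffAt_matrix_inv {𝕜 K X : Type*} [NontriviallyNormedField 𝕜] [RCLike K]
    [NormedAlgebra 𝕜 K] [NormedAddCommGroup X] [NormedSpace 𝕜 X] {r : ℕ∞ω}
    {f : X → Matrix n n K} {x : X} (hf : ContDiffAt 𝕜 r f x) (hx : IsUnit (f x)) :
    ContDiffAt 𝕜 r (fun y ↦ (f y)⁻¹) x := by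
  have hinv : ContDiffAt 𝕜 r Ring.inverse (f x) := contDiffAt_ringInverse 𝕜 hx.unit
  simpa only [nonsing_inv_eq_ringInverse] using hinv.fun_comp x hf

theorem contDiffAt_cmap {X : Type*} [NormedAddCommGroup X] [NormedSpace ℝ X] {N : ℕ} {r : ℕ∞ω}
    {S : X → Matrix (Fin N) (Fin N) ℝ} {x : X} (hS : ∀ i j, ContDiffAt ℝ r (fun y ↦ S y i j) x) :
    ContDiffAt ℝ r (fun y ↦ cmap (S y)) x :=
  contDiffAt_matrix.2 fun i j ↦ ofRealCLM.contDiff.contDiffAt.comp x (hS i j)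

theorem isBigO_sub_apply_zero_snd {E F G : Type*} [NormedAddCommGroup E] [NormedSpace ℝ E]
    [NormedAddCommGroup F] [NormedSpace ℝ F] [NormedAddCommGroup G] [NormedSpace ℝ G]
    {r : ℕ∞ω} {f : E × F → G} {p : E} (hf : ContDiffAt ℝ r f (p, 0)) (hr : r ≠ 0) :
    (fun x ↦ f x - f (x.1, 0)) =O[𝓝 (p, 0)] (fun x ↦ ‖x.2‖) := by
  have htendsto : Tendsto (fun x : E × F ↦ (x, (x.1, (0 : F)))) (𝓝 (p, 0))
      (𝓝 ((p, 0), (p, 0))) :=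
    Continuous.tendsto' (by fun_prop) _ _ rfl
  simpa [Function.comp_def, Prod.norm_def] using
    ((hf.hasStrictFDerivAt hr).isBigO_sub.comp_tendsto htendsto).norm_right

end MatrixCalculus

section Symbols

attribute [local instance] Matrix.linftyOpNormedRing Matrix.linftyOpNormedAlgebra

/-- The part `(iτ + γ) Id + Σ_{j<d} i η_j A_j` of `B_{d,d} ℳ` that is linear in `ζ`. -/
def firstOrderSymbol {N m : ℕ} (A : Fin (m + 1) → Matrix (Fin N) (Fin N) ℝ) (ζ : Freq m) :
    Matrix (Fin N) (Fin N) ℂ :=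
  (I * (ζ.1 : ℂ) + (ζ.2.2 : ℂ)) • (1 : Matrix (Fin N) (Fin N) ℂ) +
    ∑ j : Fin m, (I * (ζ.2.1 j : ℂ)) • cmap (A j.castSucc)

/-- The part `Σ_{j,k<d} η_j η_k B_{j,k}` of `B_{d,d} ℳ` that is quadratic in `ζ`. -/
def tangentialSymbol {N m : ℕ} (B : Fin (m + 1) → Fin (m + 1) → Matrix (Fin N) (Fin N) ℝ)
    (ζ : Freq m) : Matrix (Fin N) (Fin N) ℂ :=
  ∑ j : Fin m, ∑ k : Fin m, ((ζ.2.1 j * ζ.2.1 k : ℝ) : ℂ) • cmap (B j.castSucc k.castSucc)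

theorem calM_eq {N m : ℕ} (A : Fin (m + 1) → Matrix (Fin N) (Fin N) ℝ)
    (B : Fin (m + 1) → Fin (m + 1) → Matrix (Fin N) (Fin N) ℝ) (ζ : Freq m) :
    calM A B ζ = (cmap (B (Fin.last m) (Fin.last m)))⁻¹ *
      (firstOrderSymbol A ζ + tangentialSymbol B ζ) :=
  rfl

theorem calM_zero {N m : ℕ} (A : Fin (m + 1) → Matrix (Fin N) (Fin N) ℝ)
    (B : Fin (m + 1) → Fin (m + 1) → Matrix (Fin N) (Fin N) ℝ) : calM A B 0 = 0 := by
  simp [calM]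

theorem calA_zero {N m : ℕ} (A : Fin (m + 1) → Matrix (Fin N) (Fin N) ℝ)
    (B : Fin (m + 1) → Fin (m + 1) → Matrix (Fin N) (Fin N) ℝ) :
    calA A B 0 = (cmap (B (Fin.last m) (Fin.last m)))⁻¹ * cmap (A (Fin.last m)) := by
  simp [calA]

theorem norm_ofReal_eta_mul_eta_le {m : ℕ} (ζ : Freq m) (j k : Fin m) :
    ‖((ζ.2.1 j * ζ.2.1 k : ℝ) : ℂ)‖ ≤ ‖ζ‖ ^ 2 := by
  have hη (j : Fin m) : ‖ζ.2.1 j‖ ≤ ‖ζ‖ :=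
    (norm_le_pi_norm _ j).trans ((norm_fst_le ζ.2).trans (norm_snd_le ζ))
  rw [norm_real, norm_mul, sq]
  exact mul_le_mul (hη j) (hη k) (norm_nonneg _) (norm_nonneg _)

theorem isBigO_tangentialSymbol {E : Type*} [TopologicalSpace E] {N m : ℕ}
    {B : Fin (m + 1) → Fin (m + 1) → E → Matrix (Fin N) (Fin N) ℝ} {p₀ : E}
    (hB : ∀ j k, ContinuousAt (fun p ↦ cmap (B j k p)) p₀) :
    (fun x : E × Freq m ↦ tangentialSymbol (B · · x.1) x.2) =O[𝓝 (p₀, 0)]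
      (fun x ↦ ‖x.2‖ ^ 2) := by
  have hterm (j k : Fin m) : (fun x : E × Freq m ↦
      ((x.2.2.1 j * x.2.2.1 k : ℝ) : ℂ) • cmap (B j.castSucc k.castSucc x.1)) =O[𝓝 (p₀, 0)]
        (fun x ↦ ‖x.2‖ ^ 2) := by
    have hη : (fun x : E × Freq m ↦ ((x.2.2.1 j * x.2.2.1 k : ℝ) : ℂ)) =O[𝓝 (p₀, 0)]
        (fun x ↦ ‖x.2‖ ^ 2) :=
      .of_norm_le fun x ↦ norm_ofReal_eta_mul_eta_le x.2 j k
    have hBjk : ContinuousAt (fun x : E × Freq m ↦ cmap (B j.castSucc k.castSucc x.1)) (p₀, 0) :=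
      (hB _ _).fst'
    simpa using hη.smul (hBjk.tendsto.isBigO_one ℝ)
  exact .fun_sum fun j _ ↦ .fun_sum fun k _ ↦ hterm j k

variable {E : Type*} [NormedAddCommGroup E] [NormedSpace ℝ E] {N m : ℕ} {r : ℕ∞ω}
  {A : Fin (m + 1) → E → Matrix (Fin N) (Fin N) ℝ}
  {B : Fin (m + 1) → Fin (m + 1) → E → Matrix (Fin N) (Fin N) ℝ} {x : E × Freq m}

theorem contDiff_ofReal_eta (j : Fin m) :
    ContDiff ℝ r (fun y : E × Freq m ↦ (y.2.2.1 j : ℂ)) :=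
  ofRealCLM.contDiff.comp (by fun_prop)

theorem contDiffAt_calA (hA : ContDiffAt ℝ r (fun p ↦ cmap (A (Fin.last m) p)) x.1)
    (hB : ∀ j k, ContDiffAt ℝ r (fun p ↦ cmap (B j k p)) x.1)
    (hunit : IsUnit (cmap (B (Fin.last m) (Fin.last m) x.1))) :
    ContDiffAt ℝ r (fun y : E × Freq m ↦ calA (A · y.1) (B · · y.1) y.2) x := by
  have hBx j k : ContDiffAt ℝ r (fun y : E × Freq m ↦ cmap (B j k y.1)) x := (hB j k).fst'
  exact (contDiffAt_matrix_inv (hBx _ _) hunit).mul (hA.fst'.sub (.sum fun j _ ↦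
    (contDiffAt_const.mul (contDiff_ofReal_eta j).contDiffAt).smul ((hBx _ _).add (hBx _ _))))

theorem contDiffAt_firstOrderSymbol (hA : ∀ j, ContDiffAt ℝ r (fun p ↦ cmap (A j p)) x.1) :
    ContDiffAt ℝ r (fun y : E × Freq m ↦ firstOrderSymbol (A · y.1) y.2) x := by
  have hτ : ContDiff ℝ r (fun y : E × Freq m ↦ (y.2.1 : ℂ)) := ofRealCLM.contDiff.comp (by fun_prop)
  have hγ : ContDiff ℝ r (fun y : E × Freq m ↦ (y.2.2.2 : ℂ)) :=
    ofRealCLM.contDiff.comp (by fun_prop)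
  have hAx j : ContDiffAt ℝ r (fun y : E × Freq m ↦ cmap (A j y.1)) x := (hA j).fst'
  exact (((contDiff_const.mul hτ).add hγ).contDiffAt.smul contDiffAt_const).add (.sum fun j _ ↦
    (contDiff_const.mul (contDiff_ofReal_eta j)).contDiffAt.smul (hAx _))

theorem contDiffAt_tangentialSymbol (hB : ∀ j k, ContDiffAt ℝ r (fun p ↦ cmap (B j k p)) x.1) :
    ContDiffAt ℝ r (fun y : E × Freq m ↦ tangentialSymbol (B · · y.1) y.2) x := by
  simp only [tangentialSymbol, ofReal_mul]
  exact .sum fun j _ ↦ .sum fun k _ ↦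
    ((contDiff_ofReal_eta j).mul (contDiff_ofReal_eta k)).contDiffAt.smul (hB _ _).fst'

theorem contDiffAt_calM (hA : ∀ j, ContDiffAt ℝ r (fun p ↦ cmap (A j p)) x.1)
    (hB : ∀ j k, ContDiffAt ℝ r (fun p ↦ cmap (B j k p)) x.1)
    (hunit : IsUnit (cmap (B (Fin.last m) (Fin.last m) x.1))) :
    ContDiffAt ℝ r (fun y : E × Freq m ↦ calM (A · y.1) (B · · y.1) y.2) x :=
  (contDiffAt_matrix_inv (hB _ _).fst' hunit).mul
    ((contDiffAt_firstOrderSymbol hA).add (contDiffAt_tangentialSymbol hB))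

theorem isBigO_solvent_add_inv_mul_firstOrderSymbol {p₀ : E}
    {H : E × Freq m → Matrix (Fin N) (Fin N) ℂ}
    (hr : r ≠ 0) (hA : ∀ j, ContDiffAt ℝ r (fun p ↦ cmap (A j p)) p₀)
    (hB : ∀ j k, ContDiffAt ℝ r (fun p ↦ cmap (B j k p)) p₀)
    (hAunit : IsUnit (cmap (A (Fin.last m) p₀)))
    (hBunit : IsUnit (cmap (B (Fin.last m) (Fin.last m) p₀)))
    (hH : Tendsto H (𝓝 (p₀, 0)) (𝓝 0))
    (hsolv : ∀ᶠ x in 𝓝 (p₀, 0),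
      IsSolvent (calA (A · x.1) (B · · x.1) x.2) (calM (A · x.1) (B · · x.1) x.2) (H x)) :
    (fun x ↦ H x + (cmap (A (Fin.last m) x.1))⁻¹ * firstOrderSymbol (A · x.1) x.2)
      =O[𝓝 (p₀, 0)] (fun x ↦ ‖x.2‖ ^ 2) := by
  have smooth_a := contDiffAt_calA (x := (p₀, (0 : Freq m))) (hA _) hB hBunit
  have smooth_m := contDiffAt_calM (x := (p₀, (0 : Freq m))) hA hB hBunit
  have smooth_d : ContDiffAt ℝ r (fun x : E × Freq m ↦ cmap (A (Fin.last m) x.1)) (p₀, 0) :=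
    (hA _).fst'
  have smooth_b : ContDiffAt ℝ r
      (fun x : E × Freq m ↦ cmap (B (Fin.last m) (Fin.last m) x.1)) (p₀, 0) := (hB _ _).fst'
  have tendsto_a := smooth_a.continuousAt.tendsto
  rw [calA_zero] at tendsto_a
  have isBigO_m := isBigO_sub_apply_zero_snd smooth_m hr
  have isBigO_a := isBigO_sub_apply_zero_snd smooth_a hr
  simp only [calM_zero, calA_zero, sub_zero] at isBigO_m isBigO_a
  have hunit : IsUnit ((cmap (B (Fin.last m) (Fin.last m) p₀))⁻¹ * cmap (A (Fin.last m) p₀)) :=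
    (isUnit_nonsing_inv_iff.2 hBunit).mul hAunit
  have tendsto_a₀ := ((contDiffAt_matrix_inv smooth_b hBunit).mul smooth_d).continuousAt.tendsto
  have expansion := isBigO_add_inverse_mul_of_isSolvent tendsto_a tendsto_a₀ hunit hH hsolv
    isBigO_m isBigO_a
  have isBigO_tangential := ((contDiffAt_matrix_inv smooth_d hAunit).continuousAt.tendsto.isBigO_one
    ℝ).mul (isBigO_tangentialSymbol fun j k ↦ (hB j k).continuousAt)
  simp only [one_mul] at isBigO_tangential
  refine (expansion.sub isBigO_tangential).congr' ?_ .rfl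
  filter_upwards [eventually_isUnit_of_tendsto smooth_b.continuousAt.tendsto hBunit] with x hx
  have hdet := (isUnit_iff_isUnit_det _).1 hx
  rw [← nonsing_inv_eq_ringInverse, calM_eq, Matrix.mul_inv_rev, nonsing_inv_nonsing_inv _ hdet,
    mul_assoc, mul_nonsing_inv_cancel_left _ _ hdet, mul_add, ← add_assoc, add_sub_cancel_right]

theorem exists_eventually_isSolventPair_calA_calM {p₀ : E} (hr : r ≠ 0)
    (hA : ∀ᶠ p in 𝓝 p₀, ∀ j, ContDiffAt ℝ r (fun q ↦ cmap (A j q)) p)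
    (hB : ∀ᶠ p in 𝓝 p₀, ∀ j k, ContDiffAt ℝ r (fun q ↦ cmap (B j k q)) p)
    (hAunit : IsUnit (cmap (A (Fin.last m) p₀)))
    (hBunit : IsUnit (cmap (B (Fin.last m) (Fin.last m) p₀))) :
    ∃ H P : E × Freq m → Matrix (Fin N) (Fin N) ℂ,
      (∀ᶠ x in 𝓝 (p₀, 0), ContDiffAt ℝ r H x ∧ ContDiffAt ℝ r P x ∧
        IsSolventPair (calA (A · x.1) (B · · x.1) x.2) (calM (A · x.1) (B · · x.1) x.2)
          (H x) (P x)) ∧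
      (fun x ↦ H x + (cmap (A (Fin.last m) x.1))⁻¹ * firstOrderSymbol (A · x.1) x.2)
        =O[𝓝 (p₀, 0)] (fun x ↦ ‖x.2‖ ^ 2) := by
  have tendsto_fst : Tendsto Prod.fst (𝓝 (p₀, (0 : Freq m))) (𝓝 p₀) := continuousAt_fst
  have hunit : ∀ᶠ x : E × Freq m in 𝓝 (p₀, 0),
      IsUnit (cmap (B (Fin.last m) (Fin.last m) x.1)) :=
    tendsto_fst.eventually (eventually_isUnit_of_tendsto
      (hB.self_of_nhds _ _).continuousAt.tendsto hBunit)
  have smooth_a : ∀ᶠ x : E × Freq m in 𝓝 (p₀, 0),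
      ContDiffAt ℝ r (fun y : E × Freq m ↦ calA (A · y.1) (B · · y.1) y.2) x := by
    filter_upwards [tendsto_fst.eventually hA, tendsto_fst.eventually hB, hunit] with x hAx hBx hx
    exact contDiffAt_calA (hAx _) hBx hx
  have smooth_m : ∀ᶠ x : E × Freq m in 𝓝 (p₀, 0),
      ContDiffAt ℝ r (fun y : E × Freq m ↦ calM (A · y.1) (B · · y.1) y.2) x := by
    filter_upwards [tendsto_fst.eventually hA, tendsto_fst.eventually hB, hunit] with x hAx hBx hx
    exact contDiffAt_calM hAx hBx hx
  obtain ⟨H, P, hHP⟩ := exists_eventually_isSolventPair smooth_a smooth_m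
    (by simpa only [calA_zero] using (isUnit_nonsing_inv_iff.2 hBunit).mul hAunit) (calM_zero _ _)
  obtain ⟨smooth_H, -, hpair⟩ := hHP.self_of_nhds
  rw [calM_zero] at hpair
  have tendsto_H : Tendsto H (𝓝 (p₀, 0)) (𝓝 0) := hpair.left_eq_zero ▸ smooth_H.continuousAt
  exact ⟨H, P, hHP, isBigO_solvent_add_inv_mul_firstOrderSymbol hr hA.self_of_nhds hB.self_of_nhds
    hAunit hBunit tendsto_H (hHP.mono fun x hx ↦ hx.2.2.left)⟩

end Symbols

section BlockDiagonalization

attribute [local instance] Matrix.linftyOpNormedRing Matrix.linftyOpNormedAlgebra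

variable {E : Type*} [NormedAddCommGroup E] [NormedSpace ℝ E] {N m : ℕ} {r : ℕ∞ω}
  {A : Fin (m + 1) → E → Matrix (Fin N) (Fin N) ℝ}
  {B : Fin (m + 1) → Fin (m + 1) → E → Matrix (Fin N) (Fin N) ℝ}

theorem exists_eventually_hyperbolic_elliptic_blocks {p₀ : E} (hr : r ≠ 0)
    (hA : ∀ᶠ p in 𝓝 p₀, ∀ j i k, ContDiffAt ℝ r (fun q ↦ A j q i k) p)
    (hB : ∀ᶠ p in 𝓝 p₀, ∀ j l i k, ContDiffAt ℝ r (fun q ↦ B j l q i k) p)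
    (hunit : IsUnit (cmap (B (Fin.last m) (Fin.last m) p₀)))
    (hre : ∀ μ ∈ spectrum ℂ
      ((cmap (B (Fin.last m) (Fin.last m) p₀))⁻¹ * cmap (A (Fin.last m) p₀)), μ.re ≠ 0) :
    ∃ c > (0 : ℝ), ∃ (C : ℝ) (H P : E × Freq m → Matrix (Fin N) (Fin N) ℂ),
      ∀ᶠ x in 𝓝 (p₀, 0),
        (∀ i j, ContDiffAt ℝ r (fun y ↦ H y i j) x) ∧
        (∀ i j, ContDiffAt ℝ r (fun y ↦ P y i j) x) ∧
        IsSolventPair (calA (A · x.1) (B · · x.1) x.2) (calM (A · x.1) (B · · x.1) x.2)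
          (H x) (P x) ∧
        (∀ μ ∈ spectrum ℂ (P x), c ≤ |μ.re|) ∧
        ∀ i j, ‖(H x + (cmap (A (Fin.last m) x.1))⁻¹ * firstOrderSymbol (A · x.1) x.2) i j‖ ≤
          C * ‖x.2‖ ^ 2 := by
  have hAunit : IsUnit (cmap (A (Fin.last m) p₀)) := by
    have hprod : IsUnit ((cmap (B (Fin.last m) (Fin.last m) p₀))⁻¹ * cmap (A (Fin.last m) p₀)) :=
      (spectrum.zero_notMem_iff ℂ).1 fun h0 ↦ hre 0 h0 zero_re
    exact (IsUnit.mul_iff.1 hprod).2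
  obtain ⟨H, P, hHP, hexpansion⟩ := exists_eventually_isSolventPair_calA_calM hr
    (hA.mono fun p hp j ↦ contDiffAt_cmap (hp j))
    (hB.mono fun p hp j l ↦ contDiffAt_cmap (hp j l)) hAunit hunit
  obtain ⟨-, smooth_P, hpair⟩ := hHP.self_of_nhds
  rw [calM_zero, calA_zero] at hpair
  rw [← hpair.right_eq] at hre
  obtain ⟨c, hc, hgap⟩ := exists_pos_eventually_le_abs_re_of_mem_spectrum hre
  obtain ⟨C, hC⟩ := hexpansion.bound
  refine ⟨c, hc, C, H, P, ?_⟩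
  filter_upwards [hHP, smooth_P.continuousAt.eventually hgap, hC]
    with x ⟨hHx, hPx, hpairx⟩ hgapx hCx
  refine ⟨contDiffAt_matrix.1 hHx, contDiffAt_matrix.1 hPx, hpairx, hgapx, fun i j ↦ ?_⟩
  simpa using (norm_entry_le_linftyOpNorm _ i j).trans hCx

end BlockDiagonalization

theorem calG_block_diagonalization_general {E : Type*} [NormedAddCommGroup E] [NormedSpace ℝ E]
    {N m : ℕ} {r : ℕ∞ω} (hr : r ≠ 0) {𝒪 : Set E} (hO : IsOpen 𝒪)
    (A : Fin (m + 1) → E → Matrix (Fin N) (Fin N) ℝ)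
    (B : Fin (m + 1) → Fin (m + 1) → E → Matrix (Fin N) (Fin N) ℝ)
    (hA : ∀ j i k, ContDiffOn ℝ r (fun p ↦ A j p i k) 𝒪)
    (hB : ∀ j l i k, ContDiffOn ℝ r (fun p ↦ B j l p i k) 𝒪) {p₀ : E} (hp₀ : p₀ ∈ 𝒪)
    (hunit : IsUnit (cmap (B (Fin.last m) (Fin.last m) p₀)))
    (hre : ∀ μ ∈ spectrum ℂ
      ((cmap (B (Fin.last m) (Fin.last m) p₀))⁻¹ * cmap (A (Fin.last m) p₀)), μ.re ≠ 0) :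
    ∃ Ω : Set (E × Freq m), IsOpen Ω ∧ (p₀, (0 : Freq m)) ∈ Ω ∧ (∀ x ∈ Ω, x.1 ∈ 𝒪) ∧
    ∃ c > (0 : ℝ), ∃ V : E × Freq m → Matrix (Fin N ⊕ Fin N) (Fin N ⊕ Fin N) ℂ,
    ∃ H P : E × Freq m → Matrix (Fin N) (Fin N) ℂ,
      (∀ i j, ContDiffOn ℝ r (fun x ↦ V x i j) Ω) ∧
      (∀ i j, ContDiffOn ℝ r (fun x ↦ H x i j) Ω) ∧
      (∀ i j, ContDiffOn ℝ r (fun x ↦ P x i j) Ω) ∧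
      (∀ x ∈ Ω, IsUnit (V x)) ∧
      (∀ x ∈ Ω, (V x)⁻¹ * calG (A · x.1) (B · · x.1) x.2 * V x = fromBlocks (H x) 0 0 (P x)) ∧
      (∀ p, (p, (0 : Freq m)) ∈ Ω → H (p, 0) = 0 ∧
        P (p, 0) = (cmap (B (Fin.last m) (Fin.last m) p))⁻¹ * cmap (A (Fin.last m) p)) ∧
      (∀ x ∈ Ω, ∀ μ ∈ spectrum ℂ (P x), c ≤ |μ.re|) ∧
      ∃ C : ℝ, ∀ x ∈ Ω, ∀ i j,
        ‖H x i j - (-((cmap (A (Fin.last m) x.1))⁻¹ * firstOrderSymbol (A · x.1) x.2)) i j‖ ≤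
          C * ‖x.2‖ ^ 2 := by
  have hO' : ∀ᶠ p in 𝓝 p₀, p ∈ 𝒪 := hO.mem_nhds hp₀
  obtain ⟨c, hc, C, H, P, hHP⟩ := exists_eventually_hyperbolic_elliptic_blocks hr
    (hO'.mono fun p hp j i k ↦ (hA j i k).contDiffAt (hO.mem_nhds hp))
    (hO'.mono fun p hp j l i k ↦ (hB j l i k).contDiffAt (hO.mem_nhds hp)) hunit hre
  have tendsto_fst : Tendsto Prod.fst (𝓝 (p₀, (0 : Freq m))) (𝓝 p₀) := continuousAt_fst
  obtain ⟨Ω, hΩ, hΩopen, hmem⟩ := eventually_nhds_iff.1 (hHP.and (tendsto_fst.eventually hO'))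
  have smooth_H i j : ContDiffOn ℝ r (fun x ↦ H x i j) Ω :=
    fun x hx ↦ ((hΩ x hx).1.1 i j).contDiffWithinAt
  have smooth_P i j : ContDiffOn ℝ r (fun x ↦ P x i j) Ω :=
    fun x hx ↦ ((hΩ x hx).1.2.1 i j).contDiffWithinAt
  have hpair x (hx : x ∈ Ω) := (hΩ x hx).1.2.2.1
  refine ⟨Ω, hΩopen, hmem, fun x hx ↦ (hΩ x hx).2, c, hc,
    fun x ↦ blockVandermonde (H x) (P x), H, P, ?_, smooth_H, smooth_P,
    fun x hx ↦ (hpair x hx).isUnit_blockVandermonde,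
    fun x hx ↦ (hpair x hx).blockVandermonde_inv_mul_companion_mul, fun p hp ↦ ?_,
    fun x hx ↦ (hΩ x hx).1.2.2.2.1, C, fun x hx i j ↦ ?_⟩
  · rintro (i | i) (j | j)
    exacts [contDiffOn_const, contDiffOn_const, smooth_H i j, smooth_P i j]
  · have hpair₀ := hpair _ hp
    rw [calM_zero, calA_zero] at hpair₀
    exact ⟨hpair₀.left_eq_zero, hpair₀.right_eq⟩
  · simpa [sub_neg_eq_add] using (hΩ x hx).1.2.2.2.2 i j

/-- Smooth block diagonalization of `𝒢(p, ζ)` near `ζ = 0` into a small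
"hyperbolic" block `H` and an "elliptic" block `P` whose eigenvalues stay away from the
imaginary axis. -/
theorem calG_block_diagonalization {M N m : ℕ} (𝒪 : Set (Fin M → ℝ)) (hO : IsOpen 𝒪)
    (A : Fin (m + 1) → (Fin M → ℝ) → Matrix (Fin N) (Fin N) ℝ)
    (B : Fin (m + 1) → Fin (m + 1) → (Fin M → ℝ) → Matrix (Fin N) (Fin N) ℝ)
    (h0 : HypH0 𝒪 A B) (h1 : HypH1 𝒪 A) (h2 : HypH2 𝒪 A B) (h3 : HypH3 𝒪 A)
    (p₀ : Fin M → ℝ) (hp₀ : p₀ ∈ 𝒪) :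
    ∃ Ω : Set ((Fin M → ℝ) × Freq m), IsOpen Ω ∧ (p₀, (0 : Freq m)) ∈ Ω ∧
      (∀ x ∈ Ω, x.1 ∈ 𝒪) ∧
    ∃ c > (0 : ℝ),
    ∃ V : (Fin M → ℝ) × Freq m → Matrix (Fin N ⊕ Fin N) (Fin N ⊕ Fin N) ℂ,
    ∃ H P : (Fin M → ℝ) × Freq m → Matrix (Fin N) (Fin N) ℂ,
      (∀ i j, ContDiffOn ℝ ∞ (fun x => V x i j) Ω) ∧
      (∀ i j, ContDiffOn ℝ ∞ (fun x => H x i j) Ω) ∧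
      (∀ i j, ContDiffOn ℝ ∞ (fun x => P x i j) Ω) ∧
      (∀ x ∈ Ω, IsUnit (V x)) ∧
      (∀ x ∈ Ω, (V x)⁻¹ * calG (fun j => A j x.1) (fun j k => B j k x.1) x.2 * V x =
        Matrix.fromBlocks (H x) 0 0 (P x)) ∧
      (∀ p, (p, (0 : Freq m)) ∈ Ω → H (p, 0) = 0 ∧
        P (p, 0) = (cmap (B (Fin.last m) (Fin.last m) p))⁻¹ * cmap (A (Fin.last m) p)) ∧
      (∀ x ∈ Ω, ∀ μ ∈ spectrum ℂ (P x), c ≤ |μ.re|) ∧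
      ∃ C : ℝ, ∀ x ∈ Ω, ∀ i j,
        ‖H x i j - hypBlockLin A x.1 x.2 i j‖ ≤ C * ‖x.2‖ ^ 2 := by
  exact calG_block_diagonalization_general (by simp) hO A B h0.1 h0.2 hp₀ (h2.isUnit_cmap_last hp₀)
    (h2.re_ne_zero_of_mem_spectrum h3 hp₀)

end
end
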